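/- Fix an odd prime p and ε ∈ (0,1). There is a constant C_{p,ε} < ∞ such that the following holds. Let h = 2m ≥ 2 with h ≤ ε·r. For all sufficiently large r, the half-lazy PA-PRA walk on V_r(H) satisfies τ_mix ≤ C_{p,ε}·r·(h + log r)·log r. In particular, if h ≥ log r then τ_mix ≤ C_{p,ε}·r·h·log r. -/

import Mathlib

noncomputable section

/-- Data of a bilinear form on `W` turning `W × ZMod p` into a Heisenberg group. -/
class HeisData (p : ℕ) (W : Type*) [Fact (Nat.Prime p)] [AddCommGroup W]
    [Module (ZMod p) W] where
  ω : W →ₗ[ZMod p] W →ₗ[ZMod p] ZMod p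

/-- The Heisenberg group structure on `W × ZMod p`:
`(v,z)·(w,t) = (v+w, z+t+ω(v,w)/2)`. -/
instance heisGroup (p : ℕ) (W : Type*) [Fact (Nat.Prime p)] [AddCommGroup W]
    [Module (ZMod p) W] [HeisData p W] : Group (W × ZMod p) where
  mul x y := (x.1 + y.1, x.2 + y.2 + (2 : ZMod p)⁻¹ * HeisData.ω x.1 y.1)
  one := ((0 : W), (0 : ZMod p))
  inv x := (-x.1, -x.2 + (2 : ZMod p)⁻¹ * HeisData.ω x.1 x.1)
  mul_assoc a b c := by
    refine Prod.ext ?_ ?_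
    · show a.1 + b.1 + c.1 = a.1 + (b.1 + c.1)
      exact add_assoc _ _ _
    · show a.2 + b.2 + (2 : ZMod p)⁻¹ * HeisData.ω a.1 b.1 + c.2 +
          (2 : ZMod p)⁻¹ * HeisData.ω (a.1 + b.1) c.1 =
        a.2 + (b.2 + c.2 + (2 : ZMod p)⁻¹ * HeisData.ω b.1 c.1) +
          (2 : ZMod p)⁻¹ * HeisData.ω a.1 (b.1 + c.1)
      simp only [map_add, LinearMap.add_apply]
      ring
  one_mul a := by
    refine Prod.ext ?_ ?_
    · show 0 + a.1 = a.1; simp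
    · show 0 + a.2 + (2 : ZMod p)⁻¹ * HeisData.ω 0 a.1 = a.2
      simp
  mul_one a := by
    refine Prod.ext ?_ ?_
    · show a.1 + 0 = a.1; simp
    · show a.2 + 0 + (2 : ZMod p)⁻¹ * HeisData.ω a.1 0 = a.2
      simp
  inv_mul_cancel a := by
    refine Prod.ext ?_ ?_
    · show -a.1 + a.1 = 0; simp
    · show -a.2 + (2 : ZMod p)⁻¹ * HeisData.ω a.1 a.1 + a.2 +
          (2 : ZMod p)⁻¹ * HeisData.ω (-a.1) a.1 = 0
      simp only [map_neg, LinearMap.neg_apply]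
      ring

open Finset

/-- Total variation distance between two densities on a finite set. -/
def tvDist {X : Type*} [Fintype X] (f g : X → ℝ) : ℝ := (1 / 2) * ∑ x, |f x - g x|

open Classical in
/-- The uniform probability density on a subset of a finite set. -/
def unifOn {X : Type*} [Fintype X] (G : Set X) : X → ℝ :=
  fun x => if x ∈ G then (Nat.card G : ℝ)⁻¹ else 0

/-- Mixing time: the first time all rows started in `start` are within 1/4 of `π`. -/
def mixTime {X : Type*} [Fintype X] [DecidableEq X] (Q : Matrix X X ℝ) (π : X → ℝ)
    (start : Set X) : ℕ :=
  sInf {t : ℕ | ∀ x ∈ start, tvDist ((Q ^ t) x) π ≤ 1 / 4}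

/-- Tuples generating the whole group. -/
def genSet (r : ℕ) (H : Type*) [Group H] : Set (Fin r → H) :=
  {g | Subgroup.closure (Set.range g) = ⊤}

/-- The PA-PRA kernel on `H^r`. -/
def paP (p : ℕ) [Fact (Nat.Prime p)] (r : ℕ) (H : Type*) [Group H] [Fintype H]
    [DecidableEq H] : Matrix (Fin r → H) (Fin r → H) ℝ :=
  fun g g' => (∑ i : Fin r, ∑ j : Fin r, ∑ a : ZMod p,
    ((if i ≠ j ∧ g' = Function.update g i (g i * (g j) ^ (a.val)) then (1 : ℝ) else 0) +
     (if i ≠ j ∧ g' = Function.update g i ((g j) ^ (a.val) * g i) then (1 : ℝ) else 0)))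
    / (2 * (p : ℝ) * r * ((r : ℝ) - 1))

/-- The half-lazy PA-PRA kernel. -/
def paQ (p : ℕ) [Fact (Nat.Prime p)] (r : ℕ) (H : Type*) [Group H] [Fintype H]
    [DecidableEq H] : Matrix (Fin r → H) (Fin r → H) ℝ :=
  (2⁻¹ : ℝ) • ((1 : Matrix (Fin r → H) (Fin r → H) ℝ) + paP p r H)

set_option linter.unusedSectionVars false
set_option linter.style.haveILetI false
section Entropy
variable {X ι κ : Type*} [Fintype X] [Fintype ι] [Fintype κ]

def SS (φ : X → ℝ) : ℝ := ∑ x, φ x * Real.log (φ x)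

def av (σ : ι → Equiv.Perm X) (φ : X → ℝ) (x : X) : ℝ :=
  (Fintype.card ι : ℝ)⁻¹ * ∑ a, φ (σ a x)

structure Gd (σ : ι → Equiv.Perm X) : Prop where
  one : ∃ a, ∀ x, σ a x = x
  reix : ∀ b, ∃ e : Equiv.Perm ι, ∀ a x, σ a (σ b x) = σ (e a) x

theorem Gd.card_pos {σ : ι → Equiv.Perm X} (h : Gd σ) : (0:ℝ) < Fintype.card ι := by
  obtain ⟨a, _⟩ := h.one
  haveI : Nonempty ι := ⟨a⟩
  exact_mod_cast Fintype.card_pos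

theorem av_nonneg (σ : ι → Equiv.Perm X) {φ : X → ℝ} (h : ∀ x, 0 ≤ φ x) (x : X) :
    0 ≤ av σ φ x := by
  unfold av
  exact mul_nonneg (by positivity) (Finset.sum_nonneg fun a _ => h _)

theorem le_av {σ : ι → Equiv.Perm X} (hσ : Gd σ) {φ : X → ℝ} (h : ∀ x, 0 ≤ φ x) (x : X) :
    φ x ≤ Fintype.card ι * av σ φ x := by
  have hc := hσ.card_pos
  unfold av
  rw [← mul_assoc, mul_inv_cancel₀ hc.ne', one_mul]
  obtain ⟨a, ha⟩ := hσ.one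
  have := Finset.single_le_sum (f := fun a => φ (σ a x)) (fun a _ => h _) (Finset.mem_univ a)
  simpa [ha] using this

theorem av_pos {σ : ι → Equiv.Perm X} (hσ : Gd σ) {φ : X → ℝ} (h : ∀ x, 0 ≤ φ x) {x : X}
    (hx : 0 < φ x) : 0 < av σ φ x := by
  have h1 := le_av hσ h x
  have hc := hσ.card_pos
  by_contra hcon
  push Not at hcon
  nlinarith

theorem av_inv {σ : ι → Equiv.Perm X} (hσ : Gd σ) (φ : X → ℝ) (b : ι) (x : X) :
    av σ φ (σ b x) = av σ φ x := by
  unfold av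
  obtain ⟨e, he⟩ := hσ.reix b
  simp only [he]
  rw [Equiv.sum_comp e (fun a => φ (σ a x))]

theorem sum_av {σ : ι → Equiv.Perm X} (hσ : Gd σ) (φ θ : X → ℝ)
    (hθ : ∀ b x, θ (σ b x) = θ x) : ∑ x, av σ φ x * θ x = ∑ x, φ x * θ x := by
  have hc := hσ.card_pos
  unfold av
  have h1 : ∀ x, (Fintype.card ι : ℝ)⁻¹ * (∑ a, φ (σ a x)) * θ x
      = (Fintype.card ι : ℝ)⁻¹ * ∑ a, φ (σ a x) * θ (σ a x) := by
    intro x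
    simp only [hθ]
    rw [← Finset.sum_mul, mul_assoc]
  simp only [h1]
  rw [← Finset.mul_sum, Finset.sum_comm]
  have h2 : ∀ a, ∑ x, φ (σ a x) * θ (σ a x) = ∑ x, φ x * θ x := fun a =>
    Equiv.sum_comp (σ a) (fun x => φ x * θ x)
  simp only [h2]
  rw [Finset.sum_const, Finset.card_univ, nsmul_eq_mul, ← mul_assoc,
    inv_mul_cancel₀ hc.ne', one_mul]

theorem sum_av_one {σ : ι → Equiv.Perm X} (hσ : Gd σ) (φ : X → ℝ) :
    ∑ x, av σ φ x = ∑ x, φ x := by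
  simpa using sum_av hσ φ (fun _ => 1) (fun _ _ => rfl)

theorem av_comm (σ : ι → Equiv.Perm X) (τ : κ → Equiv.Perm X)
    (h : ∀ a b x, σ a (τ b x) = τ b (σ a x)) (φ : X → ℝ) :
    av σ (av τ φ) = av τ (av σ φ) := by
  funext x
  unfold av
  simp only [← Finset.mul_sum]
  rw [Finset.sum_comm]
  simp only [h]
  ring

theorem av_of_inv {σ : ι → Equiv.Perm X} (hσ : Gd σ) (φ : X → ℝ)
    (hθ : ∀ b x, φ (σ b x) = φ x) : av σ φ = φ := by
  funext x
  have hc := hσ.card_pos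
  unfold av
  simp only [hθ]
  rw [Finset.sum_const, Finset.card_univ, nsmul_eq_mul, ← mul_assoc,
    inv_mul_cancel₀ hc.ne', one_mul]

theorem SS_av {σ : ι → Equiv.Perm X} (hσ : Gd σ) (φ : X → ℝ) :
    SS (av σ φ) = ∑ x, φ x * Real.log (av σ φ x) := by
  unfold SS
  exact sum_av hσ φ (fun x => Real.log (av σ φ x)) (fun b x => by rw [av_inv hσ])

/-- strong subadditivity -/
theorem ssa {σ : ι → Equiv.Perm X} {τ : κ → Equiv.Perm X} (hσ : Gd σ) (hτ : Gd τ)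
    (h : ∀ a b x, σ a (τ b x) = τ b (σ a x)) {φ : X → ℝ} (hφ : ∀ x, 0 ≤ φ x) :
    SS (av τ φ) - SS (av σ (av τ φ)) ≤ SS φ - SS (av σ φ) := by
  have hcm := av_comm σ τ h φ
  have hcinv : ∀ b x, av σ (av τ φ) (τ b x) = av σ (av τ φ) x := by
    intro b x; rw [hcm, av_inv hτ]
  have e1 := SS_av hσ φ
  have e2 := SS_av hτ φ
  have e3 : SS (av σ (av τ φ)) = ∑ x, φ x * Real.log (av σ (av τ φ) x) := by
    rw [SS_av hσ]
    exact sum_av hτ φ (fun x => Real.log (av σ (av τ φ) x)) (fun b x => by rw [hcinv])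
  rw [e1, e2, e3]
  unfold SS
  have ha0 := av_nonneg σ hφ
  have hb0 := av_nonneg τ hφ
  have hc0 := av_nonneg σ hb0
  have key : ∀ x, φ x - av σ φ x * (av τ φ x / av σ (av τ φ) x) ≤
      φ x * Real.log (φ x) + φ x * Real.log (av σ (av τ φ) x)
        - φ x * Real.log (av σ φ x) - φ x * Real.log (av τ φ x) := by
    intro x
    rcases (hφ x).eq_or_lt with h0 | h0
    · rw [← h0]
      have := mul_nonneg (ha0 x) (div_nonneg (hb0 x) (hc0 x))
      simp
      linarith
    · have pa := av_pos hσ hφ h0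
      have pb := av_pos hτ hφ h0
      have pc := av_pos hσ hb0 pb
      set a := av σ φ x
      set b := av τ φ x
      set c := av σ (av τ φ) x
      have hl := Real.one_sub_inv_le_log_of_pos (x := φ x * c / (a * b)) (by positivity)
      rw [Real.log_div (by positivity) (by positivity), Real.log_mul h0.ne' pc.ne',
        Real.log_mul pa.ne' pb.ne'] at hl
      have := mul_le_mul_of_nonneg_left hl h0.le
      have e : φ x * (1 - (φ x * c / (a * b))⁻¹) = φ x - a * (b / c) := by
        field_simp
      rw [e] at this
      linarith
  have hsum := Finset.sum_le_sum (fun x (_ : x ∈ (Finset.univ : Finset X)) => key x)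
  have hz : ∑ x, av σ φ x * (av τ φ x / av σ (av τ φ) x) = ∑ x, φ x := by
    rw [← sum_av hτ (av σ φ) (fun x => av τ φ x / av σ (av τ φ) x)
      (fun b x => by simp only [hcinv, av_inv hτ]), ← sum_av_one hτ φ]
    apply Finset.sum_congr rfl
    intro x _
    rw [← hcm]
    by_cases hc : av σ (av τ φ) x = 0
    · have := le_av hσ hb0 x
      rw [hc, mul_zero] at this
      rw [hc, zero_mul]
      exact le_antisymm (hb0 x) this
    · field_simp
  simp only [Finset.sum_sub_distrib, Finset.sum_add_distrib] at hsum
  rw [hz] at hsum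
  linarith

/-- Jensen -/
theorem SS_av_le (σ : ι → Equiv.Perm X) (hσ : Gd σ) {φ : X → ℝ} (hφ : ∀ x, 0 ≤ φ x) :
    SS (av σ φ) ≤ SS φ := by
  rw [SS_av hσ]
  have key : ∀ x, φ x - av σ φ x ≤ φ x * Real.log (φ x) - φ x * Real.log (av σ φ x) := by
    intro x
    rcases (hφ x).eq_or_lt with h0 | h0
    · rw [← h0]; simp; exact av_nonneg σ hφ x
    · have pa := av_pos hσ hφ h0
      have hl := Real.one_sub_inv_le_log_of_pos (x := φ x / av σ φ x) (by positivity)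
      rw [Real.log_div h0.ne' pa.ne'] at hl
      have := mul_le_mul_of_nonneg_left hl h0.le
      have e : φ x * (1 - (φ x / av σ φ x)⁻¹) = φ x - av σ φ x := by field_simp
      linarith
  have hsum := Finset.sum_le_sum (fun x (_ : x ∈ (Finset.univ : Finset X)) => key x)
  simp only [Finset.sum_sub_distrib] at hsum
  rw [sum_av_one hσ] at hsum
  unfold SS
  linarith

/-- tensorization over a list of commuting averages -/
theorem tensor {J : Type*} (σ : J → ι → Equiv.Perm X) (hσ : ∀ j, Gd (σ j))
    (h : ∀ j k a b x, j ≠ k → σ j a (σ k b x) = σ k b (σ j a x))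
    {φ : X → ℝ} (hφ : ∀ x, 0 ≤ φ x) (l : List J) (hl : l.Nodup) :
    (∀ x, 0 ≤ l.foldr (fun j f => av (σ j) f) φ x) ∧
    (∀ j, j ∉ l → SS (l.foldr (fun j f => av (σ j) f) φ)
        - SS (av (σ j) (l.foldr (fun j f => av (σ j) f) φ)) ≤ SS φ - SS (av (σ j) φ)) ∧
    (∀ j ∈ l, ∀ b x, l.foldr (fun j f => av (σ j) f) φ (σ j b x) =
        l.foldr (fun j f => av (σ j) f) φ x) ∧
    SS φ - SS (l.foldr (fun j f => av (σ j) f) φ) ≤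
      (l.map (fun j => SS φ - SS (av (σ j) φ))).sum := by
  induction l with
  | nil => exact ⟨by simpa using hφ, by simp, by simp, by simp⟩
  | cons k l ih =>
    rw [List.nodup_cons] at hl
    obtain ⟨i1, i2, i3, i4⟩ := ih hl.2
    simp only [List.foldr_cons]
    refine ⟨av_nonneg _ i1, ?_, ?_, ?_⟩
    · intro j hj
      rw [List.mem_cons, not_or] at hj
      exact (ssa (hσ j) (hσ k) (fun a b x => h j k a b x hj.1) i1).trans (i2 j hj.2)
    · intro j hj b x
      by_cases hjk : j = k
      · subst hjk; rw [av_inv (hσ j)]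
      · have hjl : j ∈ l := by
          rcases List.mem_cons.1 hj with h' | h'
          · exact absurd h' hjk
          · exact h'
        have i3' := i3 j hjl
        generalize l.foldr (fun j f => av (σ j) f) φ = F at i3' ⊢
        unfold av
        congr 1
        apply Finset.sum_congr rfl
        intro a _
        rw [h k j a b x (Ne.symm hjk), i3']
    · simp only [List.map_cons, List.sum_cons]
      have := i2 k hl.1
      linarith

/-- upper bound of local entropy -/
theorem ent_le_log (σ : ι → Equiv.Perm X) (hσ : Gd σ) {φ : X → ℝ} (hφ : ∀ x, 0 ≤ φ x) :
    SS φ - SS (av σ φ) ≤ Real.log (Fintype.card ι) * ∑ x, φ x := by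
  rw [SS_av hσ]
  unfold SS
  rw [← Finset.sum_sub_distrib, Finset.mul_sum]
  apply Finset.sum_le_sum
  intro x _
  rcases (hφ x).eq_or_lt with h0 | h0
  · rw [← h0]; simp
  · have pa := av_pos hσ hφ h0
    have := Real.log_le_log h0 (le_av hσ hφ x)
    rw [Real.log_mul hσ.card_pos.ne' pa.ne'] at this
    nlinarith

/-- Hellinger lower bound -/
theorem hell_le (σ : ι → Equiv.Perm X) (hσ : Gd σ) {φ : X → ℝ} (hφ : ∀ x, 0 ≤ φ x) :
    ∑ x, (√(φ x) - √(av σ φ x)) ^ 2 ≤ SS φ - SS (av σ φ) := by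
  rw [SS_av hσ]
  have key : ∀ x, (√(φ x) - √(av σ φ x)) ^ 2 ≤
      (φ x * Real.log (φ x) - φ x * Real.log (av σ φ x)) - (φ x - av σ φ x) := by
    intro x
    have hm := av_nonneg σ hφ x
    rcases (hφ x).eq_or_lt with h0 | h0
    · rw [← h0]; simp [Real.sq_sqrt hm]
    · have pa := av_pos hσ hφ h0
      set m := av σ φ x
      have s1 := Real.sq_sqrt h0.le
      have s2 := Real.sq_sqrt pa.le
      have p1 := Real.sqrt_pos.2 h0
      have p2 := Real.sqrt_pos.2 pa
      have hl := Real.one_sub_inv_le_log_of_pos (x := √(φ x) / √m) (by positivity)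
      rw [Real.log_div p1.ne' p2.ne', Real.log_sqrt h0.le, Real.log_sqrt pa.le] at hl
      have h3 := mul_le_mul_of_nonneg_left hl h0.le
      have e : φ x * (1 - (√(φ x) / √m)⁻¹) = φ x - √(φ x) * √m := by
        rw [inv_div]
        have : φ x * (√m / √(φ x)) = √(φ x) * √m := by
          field_simp
          rw [s1]
        rw [mul_sub, this, mul_one]
      rw [e] at h3
      nlinarith
  have hsum := Finset.sum_le_sum (fun x (_ : x ∈ (Finset.univ : Finset X)) => key x)
  simp only [Finset.sum_sub_distrib] at hsum
  rw [sum_av_one hσ] at hsum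
  unfold SS
  linarith

/-- shift bound -/
theorem shift_le (σ : ι → Equiv.Perm X) (hσ : Gd σ) {φ : X → ℝ} (hφ : ∀ x, 0 ≤ φ x) (b : ι) :
    ∑ x, (√(φ (σ b x)) - √(φ x)) ^ 2 ≤ 4 * (SS φ - SS (av σ φ)) := by
  have h1 := hell_le σ hσ hφ
  have h2 : ∑ x, (√(φ (σ b x)) - √(av σ φ x)) ^ 2 = ∑ x, (√(φ x) - √(av σ φ x)) ^ 2 := by
    rw [← Equiv.sum_comp (σ b) (fun x => (√(φ x) - √(av σ φ x)) ^ 2)]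
    simp only [av_inv hσ]
  have h3 : ∑ x, (√(φ (σ b x)) - √(φ x)) ^ 2 ≤
      2 * ∑ x, (√(φ (σ b x)) - √(av σ φ x)) ^ 2 + 2 * ∑ x, (√(φ x) - √(av σ φ x)) ^ 2 := by
    rw [Finset.mul_sum, Finset.mul_sum, ← Finset.sum_add_distrib]
    apply Finset.sum_le_sum
    intro x _
    nlinarith [sq_nonneg ((√(φ (σ b x)) - √(av σ φ x)) + (√(φ x) - √(av σ φ x)))]
  linarith

/-- entropy upper bound by square differences -/
theorem ent_le_sq (σ : ι → Equiv.Perm X) (hσ : Gd σ) {φ : X → ℝ} (hφ : ∀ x, 0 ≤ φ x) :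
    SS φ - SS (av σ φ) ≤ 4 * ∑ a, ∑ x, (√(φ (σ a x)) - √(φ x)) ^ 2 := by
  have hc := hσ.card_pos
  have key : ∀ x, φ x * Real.log (φ x) - φ x * Real.log (av σ φ x) - (φ x - av σ φ x)
      ≤ 4 * ∑ a, (√(φ (σ a x)) - √(φ x)) ^ 2 := by
    intro x
    have hm := av_nonneg σ hφ x
    have hsn : 0 ≤ ∑ a, (√(φ (σ a x)) - √(φ x)) ^ 2 :=
      Finset.sum_nonneg fun _ _ => sq_nonneg _
    rcases (hφ x).eq_or_lt with h0 | h0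
    · rw [← h0]
      simp only [zero_mul, Real.sqrt_zero, sub_zero, zero_sub, neg_neg]
      have : av σ φ x ≤ ∑ a, √(φ (σ a x)) ^ 2 := by
        unfold av
        have hge : 1 ≤ (Fintype.card ι : ℝ) := by
          have : 0 < Fintype.card ι := by exact_mod_cast hc
          exact_mod_cast this
        have : ∑ a, √(φ (σ a x)) ^ 2 = ∑ a, φ (σ a x) :=
          Finset.sum_congr rfl fun a _ => Real.sq_sqrt (hφ _)
        rw [this]
        have hs : 0 ≤ ∑ a, φ (σ a x) := Finset.sum_nonneg fun a _ => hφ _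
        have : (Fintype.card ι : ℝ)⁻¹ ≤ 1 := inv_le_one_of_one_le₀ hge
        nlinarith
      have h4 : 0 ≤ ∑ a, √(φ (σ a x)) ^ 2 := Finset.sum_nonneg fun _ _ => sq_nonneg _
      linarith
    · have pa := av_pos hσ hφ h0
      set m := av σ φ x with hmdef
      have hl := Real.log_le_sub_one_of_pos (x := φ x / m) (by positivity)
      rw [Real.log_div h0.ne' pa.ne'] at hl
      have h3 := mul_le_mul_of_nonneg_left hl h0.le
      have e : φ x * (φ x / m - 1) - (φ x - m) = (φ x - m) ^ 2 / m := by
        field_simp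
      have h5 : (φ x - m) ^ 2 / m ≤ 4 * ∑ a, (√(φ (σ a x)) - √(φ x)) ^ 2 := by
        rw [div_le_iff₀ pa]
        have e2 : m - φ x = (Fintype.card ι : ℝ)⁻¹ *
            ∑ a, (√(φ (σ a x)) - √(φ x)) * (√(φ (σ a x)) + √(φ x)) := by
          have : ∀ a, (√(φ (σ a x)) - √(φ x)) * (√(φ (σ a x)) + √(φ x)) =
              φ (σ a x) - φ x := by
            intro a
            have s1 := Real.sq_sqrt (hφ x)
            have s2 := Real.sq_sqrt (hφ (σ a x))
            nlinarith
          simp only [this]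
          rw [Finset.sum_sub_distrib, Finset.sum_const, Finset.card_univ, nsmul_eq_mul, mul_sub,
            ← mul_assoc, inv_mul_cancel₀ hc.ne', one_mul, hmdef]
          rfl
        have e3 : (φ x - m) ^ 2 = (m - φ x) ^ 2 := by ring
        rw [e3, e2, mul_pow]
        have cs := Finset.sum_mul_sq_le_sq_mul_sq Finset.univ
          (fun a => √(φ (σ a x)) - √(φ x)) (fun a => √(φ (σ a x)) + √(φ x))
        have h6 : ∑ a, (√(φ (σ a x)) + √(φ x)) ^ 2 ≤ 4 * (Fintype.card ι : ℝ) ^ 2 * m := by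
          have hb : ∀ a, (√(φ (σ a x)) + √(φ x)) ^ 2 ≤ 4 * Fintype.card ι * m := by
            intro a
            have s1 := Real.sq_sqrt (hφ x)
            have s2 := Real.sq_sqrt (hφ (σ a x))
            have l1 := le_av hσ hφ x
            have l2 := le_av hσ hφ (σ a x)
            rw [av_inv hσ] at l2
            nlinarith [sq_nonneg (√(φ (σ a x)) - √(φ x))]
          calc _ ≤ ∑ a : ι, 4 * Fintype.card ι * m := Finset.sum_le_sum fun a _ => hb a
            _ = _ := by rw [Finset.sum_const, Finset.card_univ, nsmul_eq_mul]; ring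
        calc _ ≤ ((Fintype.card ι : ℝ)⁻¹) ^ 2 * ((∑ a, (√(φ (σ a x)) - √(φ x)) ^ 2) *
              (4 * (Fintype.card ι : ℝ) ^ 2 * m)) := by
              apply mul_le_mul_of_nonneg_left _ (by positivity)
              exact cs.trans (mul_le_mul_of_nonneg_left h6 hsn)
          _ = _ := by field_simp
      linarith
  rw [SS_av hσ, Finset.sum_comm, Finset.mul_sum]
  have hsum := Finset.sum_le_sum (fun x (_ : x ∈ (Finset.univ : Finset X)) => key x)
  simp only [Finset.sum_sub_distrib] at hsum
  rw [sum_av_one hσ] at hsum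
  unfold SS
  linarith

end Entropy
section Chain
variable {p : ℕ} [hpf : Fact (Nat.Prime p)] {r : ℕ} {H : Type*} [Group H] [Fintype H] [DecidableEq H]

theorem pow_val_add (hexp : ∀ g : H, g ^ p = 1) (g : H) (a b : ZMod p) :
    g ^ (a + b).val = g ^ a.val * g ^ b.val := by
  rw [ZMod.val_add, ← pow_add]
  exact (pow_eq_pow_mod _ (hexp g)).symm

theorem pow_val_zero (g : H) : g ^ (0 : ZMod p).val = 1 := by simp

def mR (i j : Fin r) (a : ZMod p) (g : Fin r → H) : Fin r → H :=
  Function.update g i (g i * g j ^ a.val)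

def mL (i j : Fin r) (a : ZMod p) (g : Fin r → H) : Fin r → H :=
  Function.update g i (g j ^ a.val * g i)

theorem mR_mR (hexp : ∀ g : H, g ^ p = 1) {i j : Fin r} (h : i ≠ j) (a b : ZMod p)
    (g : Fin r → H) : mR i j a (mR i j b g) = mR i j (a + b) g := by
  unfold mR
  rw [Function.update_self, Function.update_of_ne h.symm, Function.update_idem, add_comm a b,
    pow_val_add hexp, mul_assoc]

theorem mL_mL (hexp : ∀ g : H, g ^ p = 1) {i j : Fin r} (h : i ≠ j) (a b : ZMod p)
    (g : Fin r → H) : mL i j a (mL i j b g) = mL i j (a + b) g := by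
  unfold mL
  rw [Function.update_self, Function.update_of_ne h.symm, Function.update_idem,
    pow_val_add hexp, mul_assoc]

theorem mR_zero (i j : Fin r) (g : Fin r → H) : mR (p := p) i j 0 g = g := by
  unfold mR; rw [pow_val_zero]; simp

theorem mL_zero (i j : Fin r) (g : Fin r → H) : mL (p := p) i j 0 g = g := by
  unfold mL; rw [pow_val_zero]; simp

def pR (hexp : ∀ g : H, g ^ p = 1) {i j : Fin r} (h : i ≠ j) (a : ZMod p) :
    Equiv.Perm (Fin r → H) where
  toFun := mR i j a
  invFun := mR i j (-a)
  left_inv g := by rw [mR_mR hexp h, neg_add_cancel, mR_zero]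
  right_inv g := by rw [mR_mR hexp h, add_neg_cancel, mR_zero]

def pL (hexp : ∀ g : H, g ^ p = 1) {i j : Fin r} (h : i ≠ j) (a : ZMod p) :
    Equiv.Perm (Fin r → H) where
  toFun := mL i j a
  invFun := mL i j (-a)
  left_inv g := by rw [mL_mL hexp h, neg_add_cancel, mL_zero]
  right_inv g := by rw [mL_mL hexp h, add_neg_cancel, mL_zero]

theorem pR_gd (hexp : ∀ g : H, g ^ p = 1) {i j : Fin r} (h : i ≠ j) : Gd (pR hexp h) where
  one := ⟨0, fun x => mR_zero i j x⟩
  reix b := ⟨Equiv.addRight b, fun a x => mR_mR hexp h a b x⟩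

theorem pL_gd (hexp : ∀ g : H, g ^ p = 1) {i j : Fin r} (h : i ≠ j) : Gd (pL hexp h) where
  one := ⟨0, fun x => mL_zero i j x⟩
  reix b := ⟨Equiv.addRight b, fun a x => mL_mL hexp h a b x⟩

def avR (p : ℕ) [Fact (Nat.Prime p)] (i j : Fin r) (f : (Fin r → H) → ℝ) (g : Fin r → H) : ℝ :=
  (p : ℝ)⁻¹ * ∑ a : ZMod p, f (mR i j a g)

def avL (p : ℕ) [Fact (Nat.Prime p)] (i j : Fin r) (f : (Fin r → H) → ℝ) (g : Fin r → H) : ℝ :=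
  (p : ℝ)⁻¹ * ∑ a : ZMod p, f (mL i j a g)

theorem avR_eq (hexp : ∀ g : H, g ^ p = 1) {i j : Fin r} (h : i ≠ j) (f : (Fin r → H) → ℝ) :
    avR p i j f = av (pR hexp h) f := by
  funext g; unfold avR av; rw [ZMod.card]; rfl

theorem avL_eq (hexp : ∀ g : H, g ^ p = 1) {i j : Fin r} (h : i ≠ j) (f : (Fin r → H) → ℝ) :
    avL p i j f = av (pL hexp h) f := by
  funext g; unfold avL av; rw [ZMod.card]; rfl

theorem paP_mulVec (f : (Fin r → H) → ℝ) (g : Fin r → H) :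
    (paP p r H).mulVec f g =
      (∑ i : Fin r, ∑ j : Fin r, if i ≠ j then (avR p i j f g + avL p i j f g) else 0)
        / (2 * r * ((r : ℝ) - 1)) := by
  have hp : (p : ℝ) ≠ 0 := by exact_mod_cast hpf.out.ne_zero
  have e1 : (paP p r H).mulVec f g = (∑ i : Fin r, ∑ j : Fin r, ∑ a : ZMod p,
      if i ≠ j then (f (mR i j a g) + f (mL i j a g)) else 0)
        / (2 * (p : ℝ) * r * ((r : ℝ) - 1)) := by
    unfold Matrix.mulVec dotProduct paP
    simp only [div_mul_eq_mul_div]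
    rw [← Finset.sum_div]
    congr 1
    simp only [Finset.sum_mul]
    rw [Finset.sum_comm]
    refine Finset.sum_congr rfl fun i _ => ?_
    rw [Finset.sum_comm]
    refine Finset.sum_congr rfl fun j _ => ?_
    rw [Finset.sum_comm]
    refine Finset.sum_congr rfl fun a _ => ?_
    by_cases h : i = j
    · simp [h]
    · simp only [ne_eq, h, not_false_eq_true, true_and, if_true, add_mul,
        Finset.sum_add_distrib, ite_mul, one_mul, zero_mul, Finset.sum_ite_eq',
        Finset.mem_univ, Finset.sum_ite_eq]
      rfl
  rw [e1]
  have e2 : ∀ i j : Fin r, (∑ a : ZMod p,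
      if i ≠ j then (f (mR i j a g) + f (mL i j a g)) else 0) =
      p * (if i ≠ j then (avR p i j f g + avL p i j f g) else 0) := by
    intro i j
    by_cases h : i = j
    · simp [h]
    · simp only [ne_eq, h, not_false_eq_true, if_true, avR, avL, Finset.sum_add_distrib]
      field_simp
  simp only [e2, ← Finset.mul_sum]
  rw [show 2 * (p : ℝ) * r * ((r : ℝ) - 1) = p * (2 * r * ((r : ℝ) - 1)) by ring,
    mul_div_mul_left _ _ hp]

theorem paQ_mulVec (f : (Fin r → H) → ℝ) (g : Fin r → H) :
    (paQ p r H).mulVec f g = f g / 2 +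
      (∑ i : Fin r, ∑ j : Fin r, if i ≠ j then (avR p i j f g + avL p i j f g) else 0)
        / (4 * r * ((r : ℝ) - 1)) := by
  unfold paQ
  rw [Matrix.smul_mulVec, Matrix.add_mulVec, Matrix.one_mulVec]
  simp only [Pi.smul_apply, Pi.add_apply, smul_eq_mul]
  rw [paP_mulVec]
  simp only [div_eq_mul_inv, mul_inv]
  ring

theorem paP_symm (hexp : ∀ g : H, g ^ p = 1) (g g' : Fin r → H) :
    paP p r H g g' = paP p r H g' g := by
  unfold paP
  congr 1
  refine Finset.sum_congr rfl fun i _ => ?_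
  refine Finset.sum_congr rfl fun j _ => ?_
  rw [← Equiv.sum_comp (Equiv.neg (ZMod p))]
  refine Finset.sum_congr rfl fun a _ => ?_
  by_cases h : i = j
  · simp [h]
  · have h1 : (g' = mR i j (-a) g) ↔ (g = mR i j a g') := by
      constructor
      · rintro rfl; rw [mR_mR hexp h]; simp [mR_zero]
      · rintro rfl; rw [mR_mR hexp h]; simp [mR_zero]
    have h2 : (g' = mL i j (-a) g) ↔ (g = mL i j a g') := by
      constructor
      · rintro rfl; rw [mL_mL hexp h]; simp [mL_zero]
      · rintro rfl; rw [mL_mL hexp h]; simp [mL_zero]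
    simp only [ne_eq, h, not_false_eq_true, true_and, Equiv.neg_apply]
    unfold mR at h1
    unfold mL at h2
    simp only [h1, h2]

theorem paQ_symm (hexp : ∀ g : H, g ^ p = 1) (g g' : Fin r → H) :
    paQ p r H g g' = paQ p r H g' g := by
  unfold paQ
  simp only [Matrix.smul_apply, Matrix.add_apply, Matrix.one_apply]
  rw [paP_symm hexp g g']
  simp only [eq_comm]

theorem paQ_pow_succ_row (hexp : ∀ g : H, g ^ p = 1) (t : ℕ) (x : Fin r → H) :
    (paQ p r H ^ (t + 1)) x = (paQ p r H).mulVec ((paQ p r H ^ t) x) := by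
  funext y
  rw [pow_succ, Matrix.mul_apply]
  unfold Matrix.mulVec dotProduct
  refine Finset.sum_congr rfl fun z _ => ?_
  rw [paQ_symm hexp z y, mul_comm]

theorem paQ_nonneg (hr : 2 ≤ r) (g g' : Fin r → H) : 0 ≤ paQ p r H g g' := by
  have h2 : (2 : ℝ) ≤ r := by exact_mod_cast hr
  unfold paQ
  rw [Matrix.smul_apply, Matrix.add_apply, Matrix.one_apply, smul_eq_mul]
  unfold paP
  apply mul_nonneg (by norm_num)
  apply add_nonneg
  · split_ifs <;> norm_num
  · apply div_nonneg
    · refine Finset.sum_nonneg fun i _ => Finset.sum_nonneg fun j _ => Finset.sum_nonneg fun a _ => ?_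
      split_ifs <;> norm_num
    · have : (0:ℝ) ≤ r - 1 := by linarith
      positivity

theorem sum_ne (hr : 2 ≤ r) :
    (∑ i : Fin r, ∑ j : Fin r, if i ≠ j then (1 : ℝ) else 0) = r * ((r : ℝ) - 1) := by
  have : ∀ i : Fin r, (∑ j : Fin r, if i ≠ j then (1 : ℝ) else 0) = (r : ℝ) - 1 := by
    intro i
    have e : ∀ j : Fin r, (if i ≠ j then (1 : ℝ) else 0) = 1 - if i = j then 1 else 0 := by
      intro j; by_cases h : i = j <;> simp [h]
    simp only [e, Finset.sum_sub_distrib]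
    simp
  simp only [this]
  simp
  ring

theorem paQ_one (hr : 2 ≤ r) : (paQ p r H).mulVec (fun _ => 1) = fun _ => 1 := by
  have h2 : (2 : ℝ) ≤ r := by exact_mod_cast hr
  have hp : (p : ℝ) ≠ 0 := by exact_mod_cast hpf.out.ne_zero
  funext g
  rw [paQ_mulVec]
  have e : ∀ i j : Fin r, (if i ≠ j then (avR p i j (fun _ : Fin r → H => (1:ℝ)) g
      + avL p i j (fun _ => 1) g) else 0) = 2 * if i ≠ j then (1 : ℝ) else 0 := by
    intro i j
    simp only [avR, avL, Finset.sum_const, Finset.card_univ, ZMod.card, nsmul_eq_mul, mul_one,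
      inv_mul_cancel₀ hp]
    split_ifs <;> norm_num
  simp only [e, ← Finset.mul_sum]
  rw [sum_ne hr]
  have : (r : ℝ) - 1 ≠ 0 := by linarith
  have : (r : ℝ) ≠ 0 := by linarith
  field_simp
  norm_num

theorem pow_nonneg_entry (hr : 2 ≤ r) (t : ℕ) (g g' : Fin r → H) :
    0 ≤ (paQ p r H ^ t) g g' := by
  induction t generalizing g' with
  | zero => simp only [pow_zero, Matrix.one_apply]; split_ifs <;> norm_num
  | succ t ih =>
    rw [pow_succ, Matrix.mul_apply]
    exact Finset.sum_nonneg fun z _ => mul_nonneg (ih z) (paQ_nonneg hr _ _)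

theorem pow_mulVec_one (hr : 2 ≤ r) (t : ℕ) :
    (paQ p r H ^ t).mulVec (fun _ => 1) = fun _ => 1 := by
  induction t with
  | zero => simp
  | succ t ih => rw [pow_succ, ← Matrix.mulVec_mulVec, paQ_one hr, ih]

theorem pow_row_sum (hr : 2 ≤ r) (t : ℕ) (x : Fin r → H) : ∑ y, (paQ p r H ^ t) x y = 1 := by
  have := congrFun (pow_mulVec_one (p := p) (H := H) hr t) x
  simpa [Matrix.mulVec, dotProduct] using this

theorem pow_symm (hexp : ∀ g : H, g ^ p = 1) (t : ℕ) (g g' : Fin r → H) :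
    (paQ p r H ^ t) g g' = (paQ p r H ^ t) g' g := by
  have h1 : (paQ p r H).transpose = paQ p r H := by
    ext a b; exact paQ_symm hexp b a
  have h2 : ((paQ p r H) ^ t).transpose = paQ p r H ^ t := by
    rw [Matrix.transpose_pow, h1]
  exact congrFun (congrFun h2 g') g

theorem pow_col_sum (hexp : ∀ g : H, g ^ p = 1) (hr : 2 ≤ r) (t : ℕ) (f : (Fin r → H) → ℝ) :
    ∑ x, (paQ p r H ^ t).mulVec f x = ∑ x, f x := by
  unfold Matrix.mulVec dotProduct
  rw [Finset.sum_comm]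
  refine Finset.sum_congr rfl fun y _ => ?_
  rw [← Finset.sum_mul]
  simp only [pow_symm hexp t _ y]
  rw [pow_row_sum hr, one_mul]

theorem mulVec_mono (hr : 2 ≤ r) (t : ℕ) {f f' : (Fin r → H) → ℝ} (h : ∀ x, f x ≤ f' x)
    (x : Fin r → H) : (paQ p r H ^ t).mulVec f x ≤ (paQ p r H ^ t).mulVec f' x := by
  unfold Matrix.mulVec dotProduct
  exact Finset.sum_le_sum fun y _ => mul_le_mul_of_nonneg_left (h y) (pow_nonneg_entry hr _ _ _)

/-- one step entropy decrease -/
theorem ent_step (hexp : ∀ g : H, g ^ p = 1) (hr : 2 ≤ r) {q : (Fin r → H) → ℝ}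
    (hq : ∀ x, 0 ≤ q x) :
    SS ((paQ p r H).mulVec q) ≤ SS q -
      (∑ i : Fin r, ∑ j : Fin r, if i ≠ j then (SS q - SS (avR p i j q)) else 0)
        / (4 * r * ((r : ℝ) - 1)) := by
  have h2 : (2 : ℝ) ≤ r := by exact_mod_cast hr
  have hr1 : (0:ℝ) < (r : ℝ) - 1 := by linarith
  have hr0 : (0:ℝ) < (r : ℝ) := by linarith
  have hR0 : ∀ i j : Fin r, ∀ x, 0 ≤ avR p i j q x := fun i j x =>
    mul_nonneg (by positivity) (Finset.sum_nonneg fun a _ => hq _)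
  have hL0 : ∀ i j : Fin r, ∀ x, 0 ≤ avL p i j q x := fun i j x =>
    mul_nonneg (by positivity) (Finset.sum_nonneg fun a _ => hq _)
  set w : Fin r × Fin r → ℝ := fun k => (if k.1 ≠ k.2 then (1:ℝ) else 0) / (r * ((r : ℝ) - 1))
    with hw
  have hw0 : ∀ k, 0 ≤ w k := by
    intro k; rw [hw]; simp only; apply div_nonneg
    · split_ifs <;> norm_num
    · positivity
  have hw1 : ∑ k, w k = 1 := by
    rw [hw]
    simp only
    rw [← Finset.sum_div, Fintype.sum_prod_type, sum_ne hr]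
    exact div_self (by positivity)
  set y : Fin r × Fin r → (Fin r → H) → ℝ := fun k x =>
    q x / 2 + avR p k.1 k.2 q x / 4 + avL p k.1 k.2 q x / 4 with hy
  have hQ : ∀ x, (paQ p r H).mulVec q x = ∑ k, w k • y k x := by
    intro x
    rw [paQ_mulVec]
    have e : ∀ k, w k • y k x = w k * (q x / 2) +
        (if k.1 ≠ k.2 then (avR p k.1 k.2 q x + avL p k.1 k.2 q x) else 0)
          / (4 * r * ((r : ℝ) - 1)) := by
      intro k
      simp only [hw, hy, smul_eq_mul]
      split_ifs
      · field_simp; ring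
      · simp
    simp only [e, Finset.sum_add_distrib]
    rw [← Finset.sum_mul, hw1, ← Finset.sum_div, Fintype.sum_prod_type, one_mul]
  have hcv := Real.convexOn_mul_log
  have hstep : ∀ x, (paQ p r H).mulVec q x * Real.log ((paQ p r H).mulVec q x) ≤
      ∑ k, w k * (q x * Real.log (q x) / 2 + avR p k.1 k.2 q x * Real.log (avR p k.1 k.2 q x) / 4
        + avL p k.1 k.2 q x * Real.log (avL p k.1 k.2 q x) / 4) := by
    intro x
    rw [hQ x]
    have hy0 : ∀ k, 0 ≤ y k x := by
      intro k
      have := hq x; have := hR0 k.1 k.2 x; have := hL0 k.1 k.2 x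
      simp only [hy]; positivity
    have hj := hcv.map_sum_le (t := Finset.univ) (w := w) (p := fun k => y k x)
      (fun k _ => hw0 k) hw1 (fun k _ => hy0 k)
    refine hj.trans (Finset.sum_le_sum fun k _ => ?_)
    rw [smul_eq_mul]
    apply mul_le_mul_of_nonneg_left _ (hw0 k)
    have hj2 := hcv.map_sum_le (t := (Finset.univ : Finset (Fin 3))) (w := ![1/2, 1/4, 1/4])
      (p := ![q x, avR p k.1 k.2 q x, avL p k.1 k.2 q x])
      (by intro i _; fin_cases i <;> simp) (by simp [Fin.sum_univ_three]; norm_num)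
      (by intro i _; fin_cases i <;> simp [hq, hR0, hL0])
    simp only [Fin.sum_univ_three, Matrix.cons_val_zero, Matrix.cons_val_one, Matrix.cons_val,
      smul_eq_mul] at hj2
    have e : y k x = 1 / 2 * q x + 1 / 4 * avR p k.1 k.2 q x + 1 / 4 * avL p k.1 k.2 q x := by
      simp only [hy]; ring
    rw [e]
    linarith
  have hsum : SS ((paQ p r H).mulVec q) ≤ ∑ k, w k * (SS q / 2 + SS (avR p k.1 k.2 q) / 4 +
      SS (avL p k.1 k.2 q) / 4) := by
    calc SS ((paQ p r H).mulVec q) ≤ _ := Finset.sum_le_sum fun x _ => hstep x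
      _ = _ := by
        rw [Finset.sum_comm]
        refine Finset.sum_congr rfl fun k _ => ?_
        rw [← Finset.mul_sum]
        simp only [Finset.sum_add_distrib, ← Finset.sum_div]
        rfl
  refine hsum.trans ?_
  have hk : ∀ k : Fin r × Fin r, w k * (SS q / 2 + SS (avR p k.1 k.2 q) / 4 +
      SS (avL p k.1 k.2 q) / 4) ≤ w k * SS q -
      (if k.1 ≠ k.2 then (SS q - SS (avR p k.1 k.2 q)) else 0) / (4 * r * ((r : ℝ) - 1)) := by
    intro k
    by_cases h : k.1 = k.2
    · simp [hw, h]
    · have hl : SS (avL p k.1 k.2 q) ≤ SS q := by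
        rw [avL_eq hexp h]; exact SS_av_le _ (pL_gd hexp h) hq
      have e : w k * SS q -
        (if k.1 ≠ k.2 then (SS q - SS (avR p k.1 k.2 q)) else 0) / (4 * r * ((r : ℝ) - 1)) =
        w k * (SS q - (SS q - SS (avR p k.1 k.2 q)) / 4) := by
        simp only [hw, ne_eq, h, not_false_eq_true, if_true]
        field_simp
      rw [e]
      apply mul_le_mul_of_nonneg_left _ (hw0 k)
      linarith
  refine (Finset.sum_le_sum fun k _ => hk k).trans ?_
  rw [Finset.sum_sub_distrib, ← Finset.sum_mul, hw1, one_mul, ← Finset.sum_div,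
    Fintype.sum_prod_type]

end Chain
section Rec
variable {p : ℕ} [hpf : Fact (Nat.Prime p)] {r : ℕ} {H : Type*} [Group H] [Fintype H] [DecidableEq H]

def rp (p : ℕ) [Fact (Nat.Prime p)] (x : H) (a : ZMod p) : Equiv.Perm H :=
  Equiv.mulRight (x ^ a.val)

theorem rp_gd (hexp : ∀ g : H, g ^ p = 1) (x : H) : Gd (rp p x) where
  one := ⟨0, fun y => by simp [rp]⟩
  reix b := ⟨Equiv.addLeft b, fun a y => by
    simp [rp, pow_val_add hexp, mul_assoc]⟩

def ra : H → Equiv.Perm H := fun x => Equiv.mulRight x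

theorem ra_gd : Gd (ra (H := H)) where
  one := ⟨1, fun y => by simp [ra]⟩
  reix b := ⟨Equiv.mulLeft b, fun a y => by simp [ra, mul_assoc]⟩

def pE (i : Fin r) (x : H) : Equiv.Perm (Fin r → H) where
  toFun g := Function.update g i (g i * x)
  invFun g := Function.update g i (g i * x⁻¹)
  left_inv g := by simp
  right_inv g := by simp

theorem pE_gd (i : Fin r) : Gd (pE (H := H) i) where
  one := ⟨1, fun y => by simp [pE]⟩
  reix b := ⟨Equiv.mulLeft b, fun a y => by simp [pE, mul_assoc]⟩

theorem pE_comm (i j : Fin r) (a b : H) (g : Fin r → H) (h : i ≠ j) :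
    pE i a (pE j b g) = pE j b (pE i a g) := by
  simp only [pE, Equiv.coe_fn_mk]
  rw [Function.update_of_ne h, Function.update_of_ne h.symm, Function.update_comm h.symm]

theorem sum_fiber (i : Fin r) (F : (Fin r → H) → ℝ) :
    ∑ g, ∑ x : H, F (Function.update g i x) = Fintype.card H * ∑ g, F g := by
  have e : ∀ g : Fin r → H, ∑ x : H, F (Function.update g i x) = ∑ x : H, F (pE i x g) := by
    intro g
    rw [← Equiv.sum_comp (Equiv.mulLeft (g i)) (fun x => F (Function.update g i x))]
    rfl
  simp only [e]
  rw [Finset.sum_comm]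
  have e2 : ∀ x : H, ∑ g, F (pE i x g) = ∑ g, F g := fun x => Equiv.sum_comp (pE i x) F
  simp only [e2]
  rw [Finset.sum_const, Finset.card_univ, nsmul_eq_mul]

theorem avR_upd {i j : Fin r} (h : i ≠ j) (q : (Fin r → H) → ℝ) (g : Fin r → H) (x : H) :
    avR p i j q (Function.update g i x) =
      av (rp p (g j)) (fun y => q (Function.update g i y)) x := by
  unfold avR av mR rp
  rw [ZMod.card]
  simp [Function.update_of_ne h.symm]

theorem avE_upd (i : Fin r) (q : (Fin r → H) → ℝ) (g : Fin r → H) (x : H) :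
    av (pE i) q (Function.update g i x) =
      av ra (fun y => q (Function.update g i y)) x := by
  unfold av pE ra
  simp

theorem SS_fiber (i : Fin r) (q : (Fin r → H) → ℝ) :
    ∑ g, SS (fun x => q (Function.update g i x)) = Fintype.card H * SS q := by
  unfold SS
  exact sum_fiber i (fun g => q g * Real.log (q g))

open Classical in
theorem loc_i (hexp : ∀ g : H, g ^ p = 1) {q : (Fin r → H) → ℝ} (hq : ∀ x, 0 ≤ q x)
    (κ : ℝ) (hκ : 0 ≤ κ) (i : Fin r) (Good : (Fin r → H) → Prop)
    (hinv : ∀ g x, Good (Function.update g i x) ↔ Good g)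
    (hloc : ∀ g, Good g → ∀ φ : H → ℝ, (∀ x, 0 ≤ φ x) →
      κ * (SS φ - SS (av ra φ)) ≤ ∑ j : Fin r, if i ≠ j then (SS φ - SS (av (rp p (g j)) φ)) else 0) :
    κ * (SS q - SS (av (pE i) q)) ≤
      (∑ j : Fin r, if i ≠ j then (SS q - SS (avR p i j q)) else 0) +
      κ * (Real.log (Fintype.card H) * ∑ g, if Good g then 0 else q g) := by
  have hH : (0 : ℝ) < Fintype.card H := by exact_mod_cast Fintype.card_pos
  have e1 : (Fintype.card H : ℝ) * (SS q - SS (av (pE i) q)) =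
      ∑ g : Fin r → H, (SS (fun x => q (Function.update g i x)) -
        SS (av ra (fun x => q (Function.update g i x)))) := by
    rw [Finset.sum_sub_distrib, SS_fiber, mul_sub, ← SS_fiber i (av (pE i) q)]
    congr 1
    refine Finset.sum_congr rfl fun g _ => ?_
    congr 1
    funext x
    exact avE_upd i q g x
  have e2 : (Fintype.card H : ℝ) *
      (∑ j : Fin r, if i ≠ j then (SS q - SS (avR p i j q)) else 0) =
      ∑ g : Fin r → H, ∑ j : Fin r, if i ≠ j then (SS (fun x => q (Function.update g i x)) -
        SS (av (rp p (g j)) (fun x => q (Function.update g i x)))) else 0 := by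
    rw [Finset.mul_sum, Finset.sum_comm]
    refine Finset.sum_congr rfl fun j _ => ?_
    by_cases h : i = j
    · simp [h]
    · simp only [ne_eq, h, not_false_eq_true, if_true]
      rw [Finset.sum_sub_distrib, SS_fiber, mul_sub, ← SS_fiber i (avR p i j q)]
      congr 1
      refine Finset.sum_congr rfl fun g _ => ?_
      congr 1
      funext x
      exact avR_upd h q g x
  have e3 : (Fintype.card H : ℝ) * (∑ g, if Good g then 0 else q g) =
      ∑ g, ∑ x : H, if Good g then 0 else q (Function.update g i x) := by
    rw [← sum_fiber i (fun g => if Good g then 0 else q g)]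
    simp only [hinv]
  have key : ∀ g : Fin r → H, κ * (SS (fun x => q (Function.update g i x)) -
        SS (av ra (fun x => q (Function.update g i x)))) ≤
      (∑ j : Fin r, if i ≠ j then (SS (fun x => q (Function.update g i x)) -
        SS (av (rp p (g j)) (fun x => q (Function.update g i x)))) else 0) +
      κ * (Real.log (Fintype.card H) * ∑ x : H, if Good g then 0 else q (Function.update g i x)) := by
    intro g
    have hφ : ∀ x, 0 ≤ (fun x => q (Function.update g i x)) x := fun x => hq _
    by_cases hg : Good g
    · simp only [hg, if_true, Finset.sum_const_zero, mul_zero, add_zero]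
      exact hloc g hg _ hφ
    · simp only [hg, if_false]
      have h1 := ent_le_log ra ra_gd hφ
      have h2 : 0 ≤ ∑ j : Fin r, if i ≠ j then (SS (fun x => q (Function.update g i x)) -
        SS (av (rp p (g j)) (fun x => q (Function.update g i x)))) else 0 := by
        refine Finset.sum_nonneg fun j _ => ?_
        split_ifs
        · have := SS_av_le _ (rp_gd hexp (g j)) hφ
          linarith
        · exact le_rfl
      have := mul_le_mul_of_nonneg_left h1 hκ
      linarith
  have hs := Finset.sum_le_sum (fun g (_ : g ∈ (Finset.univ : Finset (Fin r → H))) => key g)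
  rw [Finset.sum_add_distrib, ← Finset.mul_sum, ← e1, ← e2, ← Finset.mul_sum, ← Finset.mul_sum,
    ← e3] at hs
  have hs' : (Fintype.card H : ℝ) * (κ * (SS q - SS (av (pE i) q))) ≤
      Fintype.card H * ((∑ j : Fin r, if i ≠ j then (SS q - SS (avR p i j q)) else 0) +
      κ * (Real.log (Fintype.card H) * ∑ g, if Good g then 0 else q g)) := by
    calc _ = κ * ((Fintype.card H : ℝ) * (SS q - SS (av (pE i) q))) := by ring
      _ ≤ _ := hs
      _ = _ := by ring
  exact le_of_mul_le_mul_left hs' hH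

theorem const_of_upd (F : (Fin r → H) → ℝ) (h : ∀ i x g, F (Function.update g i x) = F g)
    (g g' : Fin r → H) : F g = F g' := by
  have : ∀ s : Finset (Fin r), F (s.piecewise g g') = F g' := by
    intro s
    induction s using Finset.induction_on with
    | empty => simp
    | insert a s ha ih => rw [Finset.piecewise_insert, h, ih]
  have h2 := this Finset.univ
  simpa using h2

theorem tensor_pi {q : (Fin r → H) → ℝ} (hq : ∀ x, 0 ≤ q x) (hq1 : ∑ x, q x = 1) :
    SS q + r * Real.log (Fintype.card H) ≤ ∑ i : Fin r, (SS q - SS (av (pE i) q)) := by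
  obtain ⟨h1, -, h3, h4⟩ := tensor (pE (H := H) (r := r)) pE_gd
    (fun j k a b x h => pE_comm j k a b x h) hq (List.finRange r) (List.nodup_finRange r)
  have hsum : ∀ l : List (Fin r), ∑ x, l.foldr (fun j f => av (pE j) f) q x = 1 := by
    intro l
    induction l with
    | nil => simpa using hq1
    | cons k l ih => rw [List.foldr_cons, sum_av_one (pE_gd k), ih]
  have hs := hsum (List.finRange r)
  generalize (List.finRange r).foldr (fun j f => av (pE j) f) q = F at *
  have hc := const_of_upd F (fun i x g => by
    have := h3 i (List.mem_finRange i) ((g i)⁻¹ * x) g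
    simpa [pE] using this)
  have hX : (0 : ℝ) < Fintype.card (Fin r → H) := by exact_mod_cast Fintype.card_pos
  have hF : ∀ g, F g = (Fintype.card (Fin r → H) : ℝ)⁻¹ := by
    intro g
    have : ∑ x, F x = ∑ x : Fin r → H, F g := Finset.sum_congr rfl fun x _ => hc x g
    rw [hs, Finset.sum_const, Finset.card_univ, nsmul_eq_mul] at this
    field_simp
    linarith
  have hSF : SS F = - (r * Real.log (Fintype.card H)) := by
    unfold SS
    simp only [hF]
    rw [Finset.sum_const, Finset.card_univ, nsmul_eq_mul, ← mul_assoc, mul_inv_cancel₀ hX.ne',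
      one_mul, Real.log_inv]
    simp
  rw [hSF] at h4
  rw [← Fin.sum_univ_def] at h4
  linarith

open Classical in
theorem ent_rec (hexp : ∀ g : H, g ^ p = 1) (hr : 2 ≤ r) {q : (Fin r → H) → ℝ}
    (hq : ∀ x, 0 ≤ q x) (hq1 : ∑ x, q x = 1)
    (κ : ℝ) (hκ : 0 ≤ κ) (Good : Fin r → (Fin r → H) → Prop)
    (hinv : ∀ i g x, Good i (Function.update g i x) ↔ Good i g)
    (hloc : ∀ i g, Good i g → ∀ φ : H → ℝ, (∀ x, 0 ≤ φ x) →
      κ * (SS φ - SS (av ra φ)) ≤ ∑ j : Fin r, if i ≠ j then (SS φ - SS (av (rp p (g j)) φ)) else 0) :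
    SS ((paQ p r H).mulVec q) + r * Real.log (Fintype.card H) ≤
      (1 - κ / (4 * r * ((r : ℝ) - 1))) * (SS q + r * Real.log (Fintype.card H)) +
      κ / (4 * r * ((r : ℝ) - 1)) *
        (Real.log (Fintype.card H) * ∑ i, ∑ g, if Good i g then 0 else q g) := by
  have h2 : (2 : ℝ) ≤ r := by exact_mod_cast hr
  have hr1 : (0:ℝ) < (r : ℝ) - 1 := by linarith
  have hr0 : (0:ℝ) < (r : ℝ) := by linarith
  have h1 := ent_step hexp hr hq
  have h2 := Finset.sum_le_sum (fun i (_ : i ∈ (Finset.univ : Finset (Fin r))) =>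
    loc_i hexp hq κ hκ i (Good i) (hinv i) (hloc i))
  rw [← Finset.mul_sum, Finset.sum_add_distrib, ← Finset.mul_sum, ← Finset.mul_sum] at h2
  have h3 := mul_le_mul_of_nonneg_left (tensor_pi hq hq1) hκ
  have h4 := h3.trans h2
  set D := (∑ i : Fin r, ∑ j : Fin r, if i ≠ j then (SS q - SS (avR p i j q)) else 0)
  set B := Real.log (Fintype.card H) * ∑ i, ∑ g, if Good i g then 0 else q g
  set E := SS q + r * Real.log (Fintype.card H)
  set N := 4 * (r : ℝ) * ((r : ℝ) - 1) with hN
  have hN0 : 0 < N := by positivity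
  have h5 : (κ * E - κ * B) / N ≤ D / N := by
    apply div_le_div_of_nonneg_right _ hN0.le
    linarith
  have e : (1 - κ / N) * E + κ / N * B = E - (κ * E - κ * B) / N := by
    field_simp
    ring
  rw [e]
  have : E = SS q + r * Real.log (Fintype.card H) := rfl
  linarith

end Rec
section Iter

theorem pinsker {X : Type*} [Fintype X] {q : X → ℝ} (hq : ∀ x, 0 ≤ q x)
    (hq1 : ∑ x, q x = 1) :
    (∑ x, |q x - (Fintype.card X : ℝ)⁻¹|) ^ 2 ≤ 4 * (SS q + Real.log (Fintype.card X)) := by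
  have hne : Nonempty X := by
    by_contra h
    rw [not_nonempty_iff] at h
    simp at hq1
  have hn : (0:ℝ) < Fintype.card X := by exact_mod_cast Fintype.card_pos
  set u : ℝ := (Fintype.card X : ℝ)⁻¹ with hu
  have hu0 : 0 < u := by positivity
  have hus : ∑ x : X, u = 1 := by
    rw [Finset.sum_const, Finset.card_univ, nsmul_eq_mul, hu, mul_inv_cancel₀ hn.ne']
  have hlog : Real.log (Fintype.card X) = - Real.log u := by rw [hu, Real.log_inv]; ring
  have h1 : ∀ x, (√(q x) - √u) ^ 2 ≤ q x * Real.log (q x) - q x * Real.log u - q x + u := by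
    intro x
    rcases (hq x).eq_or_lt with h | h
    · rw [← h]; simp [Real.sq_sqrt hu0.le]
    · have hs : 0 < √(q x) := Real.sqrt_pos.2 h
      have hsu : 0 < √u := Real.sqrt_pos.2 hu0
      have h3 := Real.log_le_sub_one_of_pos (div_pos hsu hs)
      rw [Real.log_div hsu.ne' hs.ne', Real.log_sqrt hu0.le, Real.log_sqrt h.le] at h3
      have h4 := mul_le_mul_of_nonneg_left h3 (by positivity : 0 ≤ 2 * (√(q x) * √(q x)))
      have h5 : 2 * (√(q x) * √(q x)) * (√u / √(q x) - 1) = 2 * √(q x) * √u - 2 * (√(q x) * √(q x)) := by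
        field_simp
      rw [h5, Real.mul_self_sqrt h.le] at h4
      nlinarith [Real.sq_sqrt h.le, Real.sq_sqrt hu0.le]
  have h2 : ∑ x, (√(q x) - √u) ^ 2 ≤ SS q + Real.log (Fintype.card X) := by
    refine (Finset.sum_le_sum fun x _ => h1 x).trans (le_of_eq ?_)
    rw [Finset.sum_add_distrib, Finset.sum_sub_distrib, Finset.sum_sub_distrib, ← Finset.sum_mul,
      hus, hq1, hlog]
    unfold SS
    ring
  have h3 : ∑ x, (√(q x) + √u) ^ 2 ≤ 4 := by
    have : ∀ x, (√(q x) + √u) ^ 2 ≤ 2 * q x + 2 * u := by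
      intro x
      nlinarith [Real.sq_sqrt (hq x), Real.sq_sqrt hu0.le, sq_nonneg (√(q x) - √u)]
    refine (Finset.sum_le_sum fun x _ => this x).trans (le_of_eq ?_)
    rw [Finset.sum_add_distrib, ← Finset.mul_sum, ← Finset.mul_sum, hus, hq1]
    norm_num
  have h4 : ∑ x, |q x - u| = ∑ x, |√(q x) - √u| * (√(q x) + √u) := by
    refine Finset.sum_congr rfl fun x _ => ?_
    rw [← abs_of_nonneg (by positivity : 0 ≤ √(q x) + √u), ← abs_mul]
    congr 1
    nlinarith [Real.sq_sqrt (hq x), Real.sq_sqrt hu0.le,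
      abs_of_nonneg (by positivity : 0 ≤ √(q x) + √u)]
  rw [h4]
  refine (Finset.sum_mul_sq_le_sq_mul_sq _ _ _).trans ?_
  simp only [sq_abs]
  have h0 : 0 ≤ ∑ x, (√(q x) - √u) ^ 2 := Finset.sum_nonneg fun x _ => sq_nonneg _
  nlinarith

theorem SS_nonpos {X : Type*} [Fintype X] {q : X → ℝ} (hq : ∀ x, 0 ≤ q x)
    (hq1 : ∑ x, q x = 1) : SS q ≤ 0 := by
  refine Finset.sum_nonpos fun x _ => ?_
  have : q x ≤ 1 := by
    rw [← hq1]; exact Finset.single_le_sum (fun y _ => hq y) (Finset.mem_univ x)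
  exact mul_nonpos_of_nonneg_of_nonpos (hq x) (Real.log_nonpos (hq x) this)

variable {p : ℕ} [hpf : Fact (Nat.Prime p)] {r : ℕ} {H : Type*} [Group H] [Fintype H] [DecidableEq H]

open Classical in
theorem ent_iter (hexp : ∀ g : H, g ^ p = 1) (hr : 2 ≤ r)
    (κ : ℝ) (hκ : 0 ≤ κ) (hκ1 : κ / (4 * r * ((r : ℝ) - 1)) ≤ 1)
    (Good : Fin r → (Fin r → H) → Prop)
    (hinv : ∀ i g x, Good i (Function.update g i x) ↔ Good i g)
    (hloc : ∀ i g, Good i g → ∀ φ : H → ℝ, (∀ x, 0 ≤ φ x) →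
      κ * (SS φ - SS (av ra φ)) ≤ ∑ j : Fin r, if i ≠ j then (SS φ - SS (av (rp p (g j)) φ)) else 0)
    (x : Fin r → H) (δ : ℝ) (T0 : ℕ) (hδ0 : 0 ≤ δ) (T : ℕ)
    (hδ : ∀ t, T0 ≤ t → t < T0 + T → Real.log (Fintype.card H) *
      ∑ i, ∑ g, (if Good i g then 0 else (paQ p r H ^ t) x g) ≤ δ) :
    (∑ g, |(paQ p r H ^ (T0 + T)) x g - (Fintype.card (Fin r → H) : ℝ)⁻¹|) ^ 2 ≤
      4 * (Real.exp (- (κ / (4 * r * ((r : ℝ) - 1)) * T)) * (r * Real.log (Fintype.card H)) + δ) := by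
  set θ := κ / (4 * r * ((r : ℝ) - 1)) with hθ
  have h2 : (2 : ℝ) ≤ r := by exact_mod_cast hr
  have hr1 : (0:ℝ) < (r : ℝ) - 1 := by linarith
  have hθ0 : 0 ≤ θ := by positivity
  have hq : ∀ t g, 0 ≤ (paQ p r H ^ t) x g := fun t g => pow_nonneg_entry hr t x g
  have hq1 : ∀ t, ∑ g, (paQ p r H ^ t) x g = 1 := fun t => pow_row_sum hr t x
  have hL : 0 ≤ Real.log (Fintype.card H) := Real.log_natCast_nonneg _
  have main : ∀ s, s ≤ T → SS ((paQ p r H ^ (T0 + s)) x) + r * Real.log (Fintype.card H) ≤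
      (1 - θ) ^ s * (r * Real.log (Fintype.card H)) + δ := by
    intro s
    induction s with
    | zero =>
      intro _
      have := SS_nonpos (hq T0) (hq1 T0)
      simp
      linarith
    | succ s ih =>
      intro hs
      have ih := ih (by omega)
      have h3 := ent_rec hexp hr (hq (T0 + s)) (hq1 (T0 + s)) κ hκ Good hinv hloc
      have h4 := hδ (T0 + s) (by omega) (by omega)
      rw [← hθ] at h3
      rw [← add_assoc, paQ_pow_succ_row hexp]
      have h5 := mul_le_mul_of_nonneg_left ih (by linarith : 0 ≤ 1 - θ)
      have h6 := mul_le_mul_of_nonneg_left h4 hθ0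
      rw [pow_succ]
      nlinarith
  have h3 := main T le_rfl
  have h4 : (1 - θ) ^ T ≤ Real.exp (-(θ * T)) := by
    have := Real.one_sub_le_exp_neg θ
    calc (1 - θ) ^ T ≤ (Real.exp (-θ)) ^ T := pow_le_pow_left₀ (by linarith) this T
      _ = Real.exp (-(θ * T)) := by rw [← Real.exp_nat_mul]; ring_nf
  have h5 := pinsker (hq (T0 + T)) (hq1 (T0 + T))
  have h6 : Real.log (Fintype.card (Fin r → H)) = r * Real.log (Fintype.card H) := by simp
  rw [h6] at h5
  refine h5.trans ?_
  have : 0 ≤ r * Real.log (Fintype.card H) := by positivity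
  nlinarith [mul_le_mul_of_nonneg_right h4 this]

end Iter
section Cyc
variable {p : ℕ} [hpf : Fact (Nat.Prime p)] {r : ℕ} {H : Type*} [Group H] [Fintype H] [DecidableEq H]

theorem exp_of_card (hc : Fintype.card H = p) (g : H) : g ^ p = 1 := by
  rw [← hc]; exact pow_card_eq_one

theorem pow_bij (hc : Fintype.card H = p) {g : H} (hg : g ≠ 1) :
    Function.Bijective (fun a : ZMod p => g ^ a.val) := by
  have ho : orderOf g = p := orderOf_eq_prime (exp_of_card hc g) hg
  rw [Fintype.bijective_iff_injective_and_card]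
  refine ⟨fun a b hab => ?_, by rw [ZMod.card, hc]⟩
  apply ZMod.val_injective
  apply pow_injOn_Iio_orderOf (x := g) _ _ hab
  · simpa [ho] using ZMod.val_lt a
  · simpa [ho] using ZMod.val_lt b

theorem av_rp_eq (hc : Fintype.card H = p) {g : H} (hg : g ≠ 1) (φ : H → ℝ) :
    av (rp p g) φ = av ra φ := by
  funext x
  unfold av rp ra
  rw [ZMod.card, hc]
  congr 1
  exact Function.Bijective.sum_comp (pow_bij hc hg) (fun y => φ (Equiv.mulRight y x))

def nz (g : Fin r → H) : ℕ := (univ.filter fun j => g j ≠ 1).card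
def nzo (i : Fin r) (g : Fin r → H) : ℕ := (univ.filter fun j => i ≠ j ∧ g j ≠ 1).card

theorem nzo_upd (i : Fin r) (g : Fin r → H) (x : H) : nzo i (Function.update g i x) = nzo i g := by
  unfold nzo
  congr 1
  ext j
  simp only [mem_filter, mem_univ, true_and]
  constructor
  · rintro ⟨h1, h2⟩; rw [Function.update_of_ne h1.symm] at h2; exact ⟨h1, h2⟩
  · rintro ⟨h1, h2⟩; rw [Function.update_of_ne h1.symm]; exact ⟨h1, h2⟩

theorem nz_eq (i : Fin r) (g : Fin r → H) : nz g = nzo i g + if g i = 1 then 0 else 1 := by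
  unfold nz nzo
  split_ifs with h
  · rw [add_zero]
    congr 1
    ext j
    simp only [mem_filter, mem_univ, true_and]
    constructor
    · intro h2
      refine ⟨?_, h2⟩
      rintro rfl; exact h2 h
    · exact fun h => h.2
  · rw [← Finset.card_erase_add_one (a := i) (by simpa using h)]
    congr 2
    ext j
    simp only [mem_erase, mem_filter, mem_univ, true_and]
    tauto

theorem sum_upd (hc : Fintype.card H = p) (V : ℕ → ℝ) (i : Fin r) (g : Fin r → H) :
    (p : ℝ)⁻¹ * ∑ x : H, V (nz (Function.update g i x)) =
      (p : ℝ)⁻¹ * V (nzo i g) + (1 - (p : ℝ)⁻¹) * V (nzo i g + 1) := by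
  have hp : (0:ℝ) < p := by exact_mod_cast hpf.out.pos
  have e : ∀ x : H, V (nz (Function.update g i x)) =
      V (nzo i g + 1) + if x = 1 then V (nzo i g) - V (nzo i g + 1) else 0 := by
    intro x
    rw [nz_eq i, nzo_upd]
    simp only [Function.update_self]
    split_ifs <;> simp
  simp only [e]
  rw [Finset.sum_add_distrib, Finset.sum_const, Finset.card_univ, hc]
  simp
  field_simp
  ring

theorem avR_V (hc : Fintype.card H = p) (V : ℕ → ℝ) {i j : Fin r} (h : i ≠ j) (g : Fin r → H) :
    avR p i j (fun g => V (nz g)) g = if g j = 1 then V (nz g) else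
      (p : ℝ)⁻¹ * V (nzo i g) + (1 - (p : ℝ)⁻¹) * V (nzo i g + 1) := by
  have hp : (0:ℝ) < p := by exact_mod_cast hpf.out.pos
  unfold avR mR
  split_ifs with hj
  · simp [hj]
    field_simp
  · rw [← sum_upd hc]
    congr 1
    rw [Function.Bijective.sum_comp (pow_bij hc hj)
      (fun y => V (nz (Function.update g i (g i * y))))]
    exact Equiv.sum_comp (Equiv.mulLeft (g i)) (fun y => V (nz (Function.update g i y)))

theorem avL_V (hc : Fintype.card H = p) (V : ℕ → ℝ) {i j : Fin r} (h : i ≠ j) (g : Fin r → H) :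
    avL p i j (fun g => V (nz g)) g = if g j = 1 then V (nz g) else
      (p : ℝ)⁻¹ * V (nzo i g) + (1 - (p : ℝ)⁻¹) * V (nzo i g + 1) := by
  have hp : (0:ℝ) < p := by exact_mod_cast hpf.out.pos
  unfold avL mL
  split_ifs with hj
  · simp [hj]
    field_simp
  · rw [← sum_upd hc]
    congr 1
    rw [Function.Bijective.sum_comp (pow_bij hc hj)
      (fun y => V (nz (Function.update g i (y * g i))))]
    exact Equiv.sum_comp (Equiv.mulRight (g i)) (fun y => V (nz (Function.update g i y)))

theorem drift (hc : Fintype.card H = p) (hr : 2 ≤ r) (V : ℕ → ℝ) (g : Fin r → H) :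
    (paQ p r H).mulVec (fun g => V (nz g)) g = V (nz g) + 
      ((nz g : ℝ) * (r - nz g) * (1 - (p:ℝ)⁻¹) * (V (nz g + 1) - V (nz g)) +
        (nz g : ℝ) * (nz g - 1) * (p:ℝ)⁻¹ * (V (nz g - 1) - V (nz g))) / (2 * r * ((r:ℝ) - 1)) := by
  have h2 : (2 : ℝ) ≤ r := by exact_mod_cast hr
  have hr1 : (0:ℝ) < (r : ℝ) - 1 := by linarith
  have hr0 : (0:ℝ) < (r : ℝ) := by linarith
  rw [paQ_mulVec]
  set n := nz g with hn
  have e : ∀ i j : Fin r, (if i ≠ j then (avR p i j (fun g => V (nz g)) g +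
      avL p i j (fun g => V (nz g)) g) else 0) =
      2 * (V n * (if i ≠ j then 1 else 0)) +
      2 * ((if i ≠ j ∧ g j ≠ 1 then 1 else 0) * (if g i = 1 then (1 - (p:ℝ)⁻¹) * (V (n+1) - V n)
        else (p:ℝ)⁻¹ * (V (n-1) - V n))) := by
    intro i j
    by_cases h : i = j
    · simp [h]
    · rw [avR_V hc V h, avL_V hc V h]
      have h3 := nz_eq i g
      rw [← hn] at h3
      by_cases hj : g j = 1
      · simp [h, hj, ← hn]; ring
      · by_cases hi : g i = 1
        · have : nzo i g = n := by simp [hi] at h3; omega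
          simp [h, hj, hi, this]; ring
        · have h4 : n = nzo i g + 1 := by simp [hi] at h3; omega
          have h5 : nzo i g = n - 1 := by omega
          have h6 : n - 1 + 1 = n := by omega
          simp [h, hj, hi, h5, h6]; ring
  simp only [e]
  simp only [Finset.sum_add_distrib, ← Finset.mul_sum, ← Finset.sum_mul]
  rw [sum_ne hr]
  have e2 : ∀ i : Fin r, (∑ j : Fin r, if i ≠ j ∧ g j ≠ 1 then (1:ℝ) else 0) = nzo i g := by
    intro i
    rw [Finset.sum_boole, nzo]
  simp only [e2]
  have e3 : ∀ i : Fin r, (nzo i g : ℝ) * (if g i = 1 then (1 - (p:ℝ)⁻¹) * (V (n+1) - V n)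
        else (p:ℝ)⁻¹ * (V (n-1) - V n)) = (n:ℝ) * ((1 - (p:ℝ)⁻¹) * (V (n+1) - V n)) +
        (if g i ≠ 1 then (1:ℝ) else 0) * (((n:ℝ) - 1) * ((p:ℝ)⁻¹ * (V (n-1) - V n)) - (n:ℝ) * ((1 - (p:ℝ)⁻¹) * (V (n+1) - V n))) := by
    intro i
    have h3 := nz_eq i g
    rw [← hn] at h3
    by_cases hi : g i = 1
    · have : nzo i g = n := by simp [hi] at h3; omega
      simp [hi, this]
    · have h4 : n = nzo i g + 1 := by simp [hi] at h3; omega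
      have : (n:ℝ) = nzo i g + 1 := by exact_mod_cast h4
      simp only [hi, if_false, this]
      simp [hi]
  simp only [e3]
  rw [Finset.sum_add_distrib, Finset.sum_const, ← Finset.sum_mul, Finset.sum_boole]
  have e4 : ((univ.filter fun j => g j ≠ 1).card : ℝ) = n := by rw [hn, nz]
  rw [e4]
  simp
  field_simp
  ring

theorem nz_le (g : Fin r → H) : nz g ≤ r := by
  unfold nz
  exact (Finset.card_le_univ _).trans (by simp)

theorem nz_zero (g : Fin r → H) : nz g = 0 ↔ g = fun _ => 1 := by
  unfold nz
  rw [Finset.card_eq_zero, Finset.filter_eq_empty_iff, funext_iff]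
  simp

theorem drift_iter (hr : 2 ≤ r) (V : (Fin r → H) → ℝ) (A c : ℝ) (hA : 0 ≤ A)
    (h : ∀ g, (paQ p r H).mulVec V g ≤ A * V g + c) (t : ℕ) (g : Fin r → H) :
    (paQ p r H ^ t).mulVec V g ≤ A ^ t * V g + c * ∑ s ∈ range t, A ^ s := by
  induction t with
  | zero => simp
  | succ t ih =>
    rw [pow_succ, ← Matrix.mulVec_mulVec]
    have h1 := mulVec_mono (p := p) hr t h g
    have h2 : (paQ p r H ^ t).mulVec (fun g => A * V g + c) g =
        A * (paQ p r H ^ t).mulVec V g + c := by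
      have : (fun g => A * V g + c) = A • V + c • (fun _ : Fin r → H => (1:ℝ)) := by
        funext g; simp
      rw [this, Matrix.mulVec_add, Matrix.mulVec_smul, Matrix.mulVec_smul, pow_mulVec_one hr]
      simp
    rw [h2] at h1
    have h3 := mul_le_mul_of_nonneg_left ih hA
    have h4 : ∑ s ∈ range (t+1), A ^ s = A * (∑ s ∈ range t, A ^ s) + 1 := by
      rw [Finset.sum_range_succ', Finset.mul_sum]
      simp [pow_succ, mul_comm]
    rw [h4]
    calc _ ≤ _ := h1
      _ ≤ A * (A ^ t * V g + c * ∑ s ∈ range t, A ^ s) + c := by linarith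
      _ = _ := by ring

theorem pow_to_one (hc : Fintype.card H = p) (hr : 2 ≤ r) (t : ℕ) {u : Fin r → H}
    (hu : u ≠ fun _ => 1) : (paQ p r H ^ t) u (fun _ => 1) = 0 := by
  have h : ∀ t, (paQ p r H ^ t).mulVec (fun g => if nz g = 0 then 1 else 0) =
      (fun g : Fin r → H => if nz g = 0 then (1:ℝ) else 0) := by
    intro t
    induction t with
    | zero => simp
    | succ t ih =>
      rw [pow_succ, ← Matrix.mulVec_mulVec]
      have : (paQ p r H).mulVec (fun g => if nz g = 0 then 1 else 0) =
        (fun g : Fin r → H => if nz g = 0 then (1:ℝ) else 0) := by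
        funext g
        rw [drift hc hr (fun n => if n = 0 then 1 else 0) g]
        rcases Nat.lt_trichotomy (nz g) 1 with h | h | h
        · have : nz g = 0 := by omega
          simp [this]
        · simp [h]
        · have h1 : nz g ≠ 0 := by omega
          have h2 : nz g - 1 ≠ 0 := by omega
          simp [h1, h2]
      rw [this, ih]
  have h1 := congrFun (h t) u
  have h2 : nz u ≠ 0 := fun h => hu ((nz_zero u).1 h)
  simp only [h2, if_false, Matrix.mulVec, dotProduct] at h1
  simp only [nz_zero] at h1
  simpa using h1

end Cyc
section Phases
variable {p : ℕ} [hpf : Fact (Nat.Prime p)] {r : ℕ} {H : Type*} [Group H] [Fintype H] [DecidableEq H]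

theorem drift1 (hc : Fintype.card H = p) (hp3 : 3 ≤ p) (hr : 2 ≤ r) (g : Fin r → H) :
    (paQ p r H).mulVec (fun g => (fun n : ℕ => (n:ℝ)⁻¹) (nz g)) g ≤
      (1 - 1 / (6 * r)) * (fun n : ℕ => (n:ℝ)⁻¹) (nz g) + 1 / (r:ℝ)^2 := by
  have h2 : (2 : ℝ) ≤ r := by exact_mod_cast hr
  have hr1 : (0:ℝ) < (r : ℝ) - 1 := by linarith
  have hr0 : (0:ℝ) < (r : ℝ) := by linarith
  have hp : (3:ℝ) ≤ p := by exact_mod_cast hp3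
  have hpi : (p:ℝ)⁻¹ ≤ 1/3 := by
    rw [inv_le_comm₀ (by linarith) (by norm_num)]; simpa using hp
  have hpi0 : 0 < (p:ℝ)⁻¹ := by positivity
  have hdr := drift (p := p) hc hr (fun n : ℕ => (n:ℝ)⁻¹) g
  rw [hdr]
  clear hdr
  have hnr := nz_le g
  generalize nz g = n at *
  simp only
  have hnr : (n:ℝ) ≤ r := by exact_mod_cast hnr
  generalize (p:ℝ)⁻¹ = x at *
  rcases Nat.eq_zero_or_pos n with h | h
  · subst h; simp
  have hn1 : (1:ℝ) ≤ n := by exact_mod_cast h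
  have hn0 : (0:ℝ) < n := by linarith
  have hb : (n : ℝ) * (n - 1) * x * (((n - 1 : ℕ) : ℝ)⁻¹ - (n:ℝ)⁻¹) ≤ x := by
    rcases Nat.eq_or_lt_of_le h with h1 | h1
    · have : n = 1 := h1.symm
      subst this; simp; exact hpi0.le
    · have : (1:ℝ) < n := by exact_mod_cast h1
      have h3 : (0:ℝ) < (n:ℝ) - 1 := by linarith
      rw [Nat.cast_sub h, Nat.cast_one]
      apply le_of_eq
      field_simp
      ring
  have ha : (n:ℝ) * (r - n) * (1 - x) * (((n + 1 : ℕ):ℝ)⁻¹ - (n:ℝ)⁻¹) = - ((1 - x) * ((r - n) / (n + 1))) := by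
    push_cast
    field_simp
    ring
  have hd : (n:ℝ) * (r - n) * (1 - x) * (((n + 1 : ℕ):ℝ)⁻¹ - (n:ℝ)⁻¹) +
        (n : ℝ) * (n - 1) * x * (((n - 1 : ℕ) : ℝ)⁻¹ - (n:ℝ)⁻¹) ≤ - (((r:ℝ) + 1) / (3 * n)) + 1 := by
    rw [ha]
    have h3 : (2/3) * (((r:ℝ) - n) / (n + 1)) ≤ (1 - x) * ((r - n) / (n + 1)) := by
      apply mul_le_mul_of_nonneg_right (by linarith)
      apply div_nonneg <;> linarith
    have h4 : (2/3) * (((r:ℝ) - n) / (n + 1)) = (2/3) * ((r + 1) / (n + 1)) - 2/3 := by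
      field_simp
      ring
    have h5 : ((r:ℝ) + 1) / (3 * n) ≤ (2/3) * ((r + 1) / (n + 1)) := by
      rw [div_mul_div_comm, div_le_div_iff₀ (by positivity) (by positivity)]
      nlinarith
    linarith
  have h6 := div_le_div_of_nonneg_right hd (by positivity : 0 ≤ 2 * r * ((r:ℝ) - 1))
  refine (add_le_add_right h6 _).trans ?_
  have h7 : (-(((r:ℝ) + 1) / (3 * n)) + 1) / (2 * r * ((r:ℝ) - 1)) ≤ - (1 / (6 * r) * (n:ℝ)⁻¹) + 1 / (r:ℝ)^2 := by
    have e1 : (-(((r:ℝ) + 1) / (3 * n)) + 1) / (2 * r * ((r:ℝ) - 1)) =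
      - (1 / (6 * r) * (n:ℝ)⁻¹) * (((r:ℝ)+1)/(r-1)) + 1 / (2 * r * ((r:ℝ) - 1)) := by
      field_simp
      ring
    rw [e1]
    have e2 : 1 / (2 * r * ((r:ℝ) - 1)) ≤ 1 / (r:ℝ)^2 := by
      apply one_div_le_one_div_of_le (by positivity)
      nlinarith
    have e3 : 1 ≤ ((r:ℝ)+1)/(r-1) := by rw [le_div_iff₀ hr1]; linarith
    have e4 : 0 ≤ 1 / (6 * r) * (n:ℝ)⁻¹ := by positivity
    nlinarith
  linarith

theorem phase1 (hc : Fintype.card H = p) (hp3 : 3 ≤ p) (hr : 2 ≤ r) (t : ℕ)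
    (ht : 6 * r * Real.log r ≤ t) {u : Fin r → H} (hu : u ≠ fun _ => 1) :
    ∑ y, (if 128 * nz y < r then (paQ p r H ^ t) u y else 0) ≤ 7 / 128 := by
  have h2 : (2 : ℝ) ≤ r := by exact_mod_cast hr
  have hr0 : (0:ℝ) < (r : ℝ) := by linarith
  have hx : 1 / (6 * (r:ℝ)) ≤ 1 := by
    rw [div_le_one (by positivity)]; linarith
  have hx0 : 0 < 1 / (6 * (r:ℝ)) := by positivity
  have h := drift_iter (p := p) hr (fun g : Fin r → H => (nz g : ℝ)⁻¹) (1 - 1 / (6 * r)) (1 / (r:ℝ)^2) (by linarith)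
    (drift1 hc hp3 hr) t u
  have hV : (nz u : ℝ)⁻¹ ≤ 1 := by
    have : nz u ≠ 0 := fun h => hu ((nz_zero u).1 h)
    have : (1:ℝ) ≤ nz u := by exact_mod_cast Nat.one_le_iff_ne_zero.2 this
    exact inv_le_one_of_one_le₀ this
  have hA : (1 - 1 / (6 * (r:ℝ))) ^ t ≤ 1 / r := by
    calc (1 - 1 / (6 * (r:ℝ))) ^ t ≤ (Real.exp (-(1 / (6 * (r:ℝ))))) ^ t :=
          pow_le_pow_left₀ (by linarith) (Real.one_sub_le_exp_neg _) t
      _ = Real.exp (-(1 / (6 * (r:ℝ)) * t)) := by rw [← Real.exp_nat_mul]; ring_nf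
      _ ≤ Real.exp (- Real.log r) := by
          apply Real.exp_le_exp.2
          apply neg_le_neg
          rw [one_div, inv_mul_eq_div, le_div_iff₀ (by positivity)]
          linarith
      _ = 1 / r := by rw [Real.exp_neg, Real.exp_log hr0, one_div]
  have hA0 : 0 ≤ (1 - 1 / (6 * (r:ℝ))) ^ t := pow_nonneg (by linarith) _
  have hG : ∑ s ∈ range t, (1 - 1 / (6 * (r:ℝ))) ^ s ≤ 6 * r := by
    have := geom_sum_mul_neg (1 - 1 / (6 * (r:ℝ))) t
    have e : (1 - (1 - 1 / (6 * (r:ℝ)))) = 1 / (6 * r) := by ring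
    rw [e] at this
    have h5 : (∑ s ∈ range t, (1 - 1 / (6 * (r:ℝ))) ^ s) = (1 - (1 - 1 / (6 * (r:ℝ))) ^ t) * (6 * r) := by
      rw [← this]; field_simp
    rw [h5]
    nlinarith
  have hB : (paQ p r H ^ t).mulVec (fun g : Fin r → H => (nz g : ℝ)⁻¹) u ≤ 7 / r := by
    refine h.trans ?_
    have e1 : (1 - 1 / (6 * (r:ℝ))) ^ t * (nz u : ℝ)⁻¹ ≤ 1 / r := by
      have : 0 ≤ (nz u : ℝ)⁻¹ := by positivity
      nlinarith
    have e2 := mul_le_mul_of_nonneg_left hG (by positivity : 0 ≤ 1 / (r:ℝ)^2)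
    have e3 : 1 / (r:ℝ)^2 * (6 * r) = 6 / r := by field_simp
    have e4 : (7:ℝ) / r = 1 / r + 6 / r := by ring
    rw [e4]
    linarith
  have hC : ∑ y, (if 128 * nz y < r then (paQ p r H ^ t) u y else 0) ≤
      (r / 128) * (paQ p r H ^ t).mulVec (fun g : Fin r → H => (nz g : ℝ)⁻¹) u := by
    simp only [Matrix.mulVec, dotProduct]
    rw [Finset.mul_sum]
    refine Finset.sum_le_sum fun y _ => ?_
    have hq := pow_nonneg_entry (p := p) hr t u y
    split_ifs with hy
    · by_cases h0 : nz y = 0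
      · rw [nz_zero] at h0
        subst h0
        rw [pow_to_one hc hr t hu]
        simp
      · have h1 : (0:ℝ) < nz y := by exact_mod_cast Nat.pos_of_ne_zero h0
        have h3 : (128:ℝ) * nz y ≤ r := by exact_mod_cast hy.le
        have h4 : 1 ≤ r / 128 * (nz y : ℝ)⁻¹ := by
          rw [← div_eq_mul_inv, le_div_iff₀ h1]; linarith
        nlinarith
    · positivity
  refine hC.trans ((mul_le_mul_of_nonneg_left hB (by positivity)).trans (le_of_eq ?_))
  field_simp

theorem drift2 (hc : Fintype.card H = p) (hp3 : 3 ≤ p) (hr : 2 ≤ r) (g : Fin r → H) :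
    (paQ p r H).mulVec (fun g => (fun n : ℕ => (1/2:ℝ)^n) (nz g)) g ≤
      1 * (fun n : ℕ => (1/2:ℝ)^n) (nz g) + (1/2:ℝ)^(r/2) := by
  have h2 : (2 : ℝ) ≤ r := by exact_mod_cast hr
  have hr1 : (0:ℝ) < (r : ℝ) - 1 := by linarith
  have hr0 : (0:ℝ) < (r : ℝ) := by linarith
  have hp : (3:ℝ) ≤ p := by exact_mod_cast hp3
  have hpi : (p:ℝ)⁻¹ ≤ 1/3 := by
    rw [inv_le_comm₀ (by linarith) (by norm_num)]; simpa using hp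
  have hpi0 : 0 < (p:ℝ)⁻¹ := by positivity
  have hdr := drift (p := p) hc hr (fun n : ℕ => (1/2:ℝ)^n) g
  rw [hdr]
  clear hdr
  have hnr' := nz_le g
  generalize nz g = n at *
  simp only
  have hnr : (n:ℝ) ≤ r := by exact_mod_cast hnr'
  generalize (p:ℝ)⁻¹ = x at *
  rcases Nat.eq_zero_or_pos n with h | h
  · subst h; simp
  obtain ⟨k, rfl⟩ : ∃ k, n = k + 1 := ⟨n - 1, by omega⟩
  have hk0 : (0:ℝ) ≤ k := by positivity
  have hnk : ((k + 1 : ℕ):ℝ) = k + 1 := by push_cast; ring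
  rw [hnk] at hnr ⊢
  have e : ((k:ℝ) + 1) * (r - (k+1)) * (1 - x) * ((1/2:ℝ)^(k+1+1) - (1/2)^(k+1)) +
      ((k:ℝ)+1) * (k + 1 - 1) * x * ((1/2:ℝ)^(k+1-1) - (1/2)^(k+1)) =
      (1/2:ℝ)^(k+1) * ((k + 1) * (k * x - (r - (k+1)) * (1 - x) / 2)) := by
    simp only [Nat.add_sub_cancel, pow_succ]
    ring
  rw [e, one_mul]
  have hpw : 0 < (1/2:ℝ)^(k+1) := by positivity
  have e1 : ((r:ℝ) - (k+1)) / 3 ≤ (r - (k+1)) * (1 - x) / 2 := by nlinarith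
  have e2 : (k:ℝ) * x ≤ k / 3 := by nlinarith
  apply add_le_add_right
  rw [div_le_iff₀ (by positivity)]
  by_cases hk : 2 * k + 1 ≤ r
  · have hk : (2:ℝ) * k + 1 ≤ r := by exact_mod_cast hk
    have : (k + 1) * (k * x - (r - (k+1)) * (1 - x) / 2) ≤ 0 := by
      apply mul_nonpos_of_nonneg_of_nonpos <;> linarith
    have h5 : (1/2:ℝ)^(k+1) * ((k + 1) * (k * x - (r - (k+1)) * (1 - x) / 2)) ≤ 0 :=
      mul_nonpos_of_nonneg_of_nonpos hpw.le this
    have : 0 ≤ (1/2:ℝ)^(r/2) * (2 * r * ((r:ℝ) - 1)) := by positivity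
    linarith
  · have h3 : (1/2:ℝ)^(k+1) ≤ (1/2:ℝ)^(r/2) :=
      pow_le_pow_of_le_one (by norm_num) (by norm_num) (by omega)
    have h4 : (k + 1) * (k * x - (r - (k+1)) * (1 - x) / 2) ≤ 2 * r * ((r:ℝ) - 1) := by
      have : k * x - (r - (k+1)) * (1 - x) / 2 ≤ r - 1 := by linarith
      nlinarith
    have h5 : 0 ≤ 2 * r * ((r:ℝ) - 1) := by positivity
    calc _ ≤ (1/2:ℝ)^(k+1) * (2 * r * ((r:ℝ) - 1)) := mul_le_mul_of_nonneg_left h4 hpw.le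
      _ ≤ _ := mul_le_mul_of_nonneg_right h3 h5

theorem phase2 (hc : Fintype.card H = p) (hp3 : 3 ≤ p) (hr : 2 ≤ r) (t : ℕ)
    {y : Fin r → H} (hy : r ≤ 128 * nz y) :
    ∑ g, (if nz g ≤ r / 256 then (paQ p r H ^ t) y g else 0) ≤ (1 + t) * (1/2:ℝ)^(r/256) := by
  have h := drift_iter (p := p) hr (fun g : Fin r → H => (1/2 : ℝ)^(nz g)) 1 ((1/2:ℝ)^(r/2)) (by norm_num)
    (drift2 hc hp3 hr) t y
  simp only [one_pow, one_mul, sum_const, card_range, nsmul_eq_mul, mul_one] at h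
  have h1 : (1/2:ℝ)^(nz y) ≤ (1/2:ℝ)^(r/256 + r/256) :=
    pow_le_pow_of_le_one (by norm_num) (by norm_num) (by omega)
  have h2 : (1/2:ℝ)^(r/2) ≤ (1/2:ℝ)^(r/256 + r/256) :=
    pow_le_pow_of_le_one (by norm_num) (by norm_num) (by omega)
  have hC : (1/2:ℝ)^(r/256) * ∑ g, (if nz g ≤ r / 256 then (paQ p r H ^ t) y g else 0) ≤
      (paQ p r H ^ t).mulVec (fun g : Fin r → H => (1/2 : ℝ)^(nz g)) y := by
    simp only [Matrix.mulVec, dotProduct]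
    rw [Finset.mul_sum]
    refine Finset.sum_le_sum fun g _ => ?_
    have hq := pow_nonneg_entry (p := p) hr t y g
    split_ifs with hg
    · have : (1/2:ℝ)^(r/256) ≤ (1/2:ℝ)^(nz g) :=
        pow_le_pow_of_le_one (by norm_num) (by norm_num) hg
      nlinarith
    · rw [mul_zero]; positivity
  have hP : (0:ℝ) < (1/2:ℝ)^(r/256) := by positivity
  have ht : (0:ℝ) ≤ t := by positivity
  rw [pow_add] at h1 h2
  have h3 := mul_le_mul_of_nonneg_left h2 ht
  apply le_of_mul_le_mul_left _ hP
  nlinarith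

open Classical in
theorem phase2b (hc : Fintype.card H = p) (hp3 : 3 ≤ p) (hr : 2 ≤ r) (T : ℕ)
    {y : Fin r → H} (hy : r ≤ 128 * nz y) :
    (∑ g, |(paQ p r H ^ T) y g - (Fintype.card (Fin r → H) : ℝ)⁻¹|) ^ 2 ≤
      4 * (Real.exp (- (((r/256 : ℕ):ℝ) / (4 * r * ((r : ℝ) - 1)) * T)) * (r * Real.log p) +
        Real.log p * (r * ((1 + T) * (1/2:ℝ)^(r/256)))) := by
  have h2 : (2 : ℝ) ≤ r := by exact_mod_cast hr
  have hr1 : (0:ℝ) < (r : ℝ) - 1 := by linarith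
  have hr0 : (0:ℝ) < (r : ℝ) := by linarith
  have hL : 0 ≤ Real.log p := Real.log_natCast_nonneg _
  have hk : ((r/256 : ℕ):ℝ) ≤ r := by exact_mod_cast Nat.div_le_self _ _
  have := ent_iter (p := p) (exp_of_card hc) hr ((r/256 : ℕ):ℝ) (by positivity)
    (by rw [div_le_one (by positivity)]; nlinarith)
    (fun i g => r / 256 ≤ nzo i g) (fun i g x => by rw [nzo_upd])
    (fun i g hg φ hφ => by
      have hD : 0 ≤ SS φ - SS (av ra φ) := by linarith [SS_av_le ra ra_gd hφ]
      have e : ∀ j : Fin r, (if i ≠ j ∧ g j ≠ 1 then (1:ℝ) else 0) * (SS φ - SS (av ra φ)) ≤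
          if i ≠ j then (SS φ - SS (av (rp p (g j)) φ)) else 0 := by
        intro j
        by_cases hij : i = j
        · simp [hij]
        · by_cases hj : g j = 1
          · simp [hij, hj]
            have := SS_av_le (rp p (1:H)) (rp_gd (exp_of_card hc) 1) hφ
            linarith
          · rw [av_rp_eq hc hj]
            simp [hij, hj]
      refine le_trans ?_ (Finset.sum_le_sum fun j _ => e j)
      rw [← Finset.sum_mul, Finset.sum_boole]
      apply mul_le_mul_of_nonneg_right _ hD
      exact_mod_cast hg)
    y (Real.log p * (r * ((1 + T) * (1/2:ℝ)^(r/256)))) 0 (by positivity) T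
    (fun t _ ht => by
      rw [hc]
      apply mul_le_mul_of_nonneg_left _ hL
      have e : ∀ i : Fin r, ∑ g, (if r / 256 ≤ nzo i g then 0 else (paQ p r H ^ t) y g) ≤
          (1 + T) * (1/2:ℝ)^(r/256) := by
        intro i
        have h3 := phase2 hc hp3 hr t hy
        refine le_trans (Finset.sum_le_sum fun g _ => ?_) (h3.trans ?_)
        · have hq := pow_nonneg_entry (p := p) hr t y g
          have h5 := nz_eq i g
          split_ifs with h6 h7 h7
          · exact hq
          · exact le_rfl
          · exact le_rfl
          · exfalso
            split_ifs at h5 <;> omega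
        · apply mul_le_mul_of_nonneg_right _ (by positivity)
          have : (t:ℝ) ≤ T := by exact_mod_cast (by omega : t ≤ T)
          linarith
      refine le_trans (le_of_eq ?_) ((Finset.sum_le_sum (s := univ) fun i _ => e i).trans (le_of_eq ?_))
      · refine sum_congr rfl fun i _ => sum_congr rfl fun g _ => ?_
        congr
      · simp)
  rw [hc, zero_add] at this
  exact this

end Phases
section Mix
variable {p : ℕ} [hpf : Fact (Nat.Prime p)]

theorem numerics1 (p : ℕ) (hp3 : 3 ≤ p) : ∃ r1 : ℕ, 512 ≤ r1 ∧ ∀ r : ℕ, r1 ≤ r → ∀ T : ℕ,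
    4096 * r * Real.log r ≤ T → (T:ℝ) ≤ 4096 * r * Real.log r + 1 →
    4 * (Real.exp (- (((r/256 : ℕ):ℝ) / (4 * r * ((r : ℝ) - 1)) * T)) * (r * Real.log p) +
        Real.log p * (r * ((1 + T) * (1/2:ℝ)^(r/256)))) ≤ 1 / 16 := by
  have hL : 0 < Real.log p := Real.log_pos (by exact_mod_cast (by omega : 1 < p))
  have h1 : Filter.Tendsto (fun n : ℕ => (n:ℝ)^3 * (1/2:ℝ)^n) Filter.atTop (nhds 0) :=
    tendsto_pow_const_mul_const_pow_of_abs_lt_one 3 (by norm_num [abs_of_pos])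
  have hη : 0 < 1 / (128 * Real.log p * (5000 * (8 * 256^3))) := by positivity
  have h2 := (h1.eventually (gt_mem_nhds hη))
  rw [Filter.eventually_atTop] at h2
  obtain ⟨N, hN⟩ := h2
  refine ⟨512 + 256 * N + ⌈128 * Real.log p⌉₊, by omega, fun r hr T hT1 hT2 => ?_⟩
  have hr512 : (512:ℝ) ≤ r := by exact_mod_cast (by omega : 512 ≤ r)
  have hr0 : (0:ℝ) < r := by linarith
  have hr1 : (0:ℝ) < (r:ℝ) - 1 := by linarith
  have hrL : 128 * Real.log p ≤ r :=
    (Nat.le_ceil _).trans (by exact_mod_cast (by omega : ⌈128 * Real.log p⌉₊ ≤ r))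
  set k := r / 256 with hk
  have hkN := hN k (by omega)
  have hk1 : r < 256 * (k + 1) := by omega
  have hk1' : (r:ℝ) ≤ 256 * (k + 1) := by exact_mod_cast hk1.le
  have hk2 : (1:ℝ) ≤ k := by exact_mod_cast (by omega : 1 ≤ k)
  have hlr : 0 < Real.log r := Real.log_pos (by linarith)
  have hlr2 : Real.log r ≤ r - 1 := Real.log_le_sub_one_of_pos hr0
  have e1 : Real.exp (- ((k:ℝ) / (4 * r * ((r : ℝ) - 1)) * T)) ≤ 1 / (r:ℝ)^2 := by
    have h3 : (1:ℝ) / (2048 * r) ≤ (k:ℝ) / (4 * r * ((r : ℝ) - 1)) := by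
      rw [div_le_div_iff₀ (by positivity) (by positivity)]
      nlinarith
    have h4 : 2 * Real.log r ≤ (k:ℝ) / (4 * r * ((r : ℝ) - 1)) * T := by
      calc 2 * Real.log r = 1 / (2048 * r) * (4096 * r * Real.log r) := by field_simp; norm_num
        _ ≤ _ := mul_le_mul h3 hT1 (by positivity) (by positivity)
    calc _ ≤ Real.exp (-(2 * Real.log r)) := Real.exp_le_exp.2 (by linarith)
      _ = 1 / (r:ℝ)^2 := by
        rw [Real.exp_neg, show (2:ℝ) * Real.log r = Real.log r + Real.log r by ring, Real.exp_add,
          Real.exp_log hr0]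
        field_simp
  have e2 : Real.exp (- ((k:ℝ) / (4 * r * ((r : ℝ) - 1)) * T)) * (r * Real.log p) ≤ 1 / 128 := by
    calc _ ≤ 1 / (r:ℝ)^2 * (r * Real.log p) := mul_le_mul_of_nonneg_right e1 (by positivity)
      _ = Real.log p / r := by field_simp
      _ ≤ _ := by rw [div_le_div_iff₀ hr0 (by norm_num)]; linarith
  have e3 : r * ((1 + (T:ℝ))) ≤ 5000 * (8 * 256^3) * (k:ℝ)^3 := by
    have h5 : (T:ℝ) ≤ 4096 * r * r + 1 := by nlinarith
    have h6 : r * (1 + (T:ℝ)) ≤ 5000 * (r:ℝ)^3 := by nlinarith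
    have h7 : (r:ℝ) ≤ 512 * k := by linarith
    have h8 : (r:ℝ)^3 ≤ (512 * k)^3 := pow_le_pow_left₀ hr0.le h7 3
    calc _ ≤ _ := h6
      _ ≤ 5000 * (512 * (k:ℝ))^3 := by linarith
      _ = _ := by ring
  have e4 : Real.log p * (r * ((1 + (T:ℝ)) * (1/2:ℝ)^k)) ≤ 1 / 128 := by
    have hP : (0:ℝ) ≤ (1/2:ℝ)^k := by positivity
    have h9 := mul_le_mul_of_nonneg_right e3 hP
    have h10 := mul_le_mul_of_nonneg_left hkN.le (by positivity : 0 ≤ Real.log p * (5000 * (8 * 256^3)))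
    calc _ = Real.log p * (r * ((1 + (T:ℝ))) * (1/2:ℝ)^k) := by ring
      _ ≤ Real.log p * (5000 * (8 * 256^3) * (k:ℝ)^3 * (1/2:ℝ)^k) :=
        mul_le_mul_of_nonneg_left h9 hL.le
      _ = Real.log p * (5000 * (8 * 256^3)) * ((k:ℝ)^3 * (1/2:ℝ)^k) := by ring
      _ ≤ _ := h10
      _ = 1 / 128 := by field_simp
  linarith

theorem cyc_mix (p : ℕ) [hpf : Fact (Nat.Prime p)] (hp3 : 3 ≤ p) : ∃ r1 : ℕ, 512 ≤ r1 ∧ ∀ r : ℕ, r1 ≤ r →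
    ∃ T : ℕ, (T:ℝ) ≤ 5000 * r * Real.log r ∧ ∀ (H : Type) [Group H] [Fintype H] [DecidableEq H],
      Fintype.card H = p → ∀ u : Fin r → H, u ≠ (fun _ => 1) →
      ∑ w, |(paQ p r H ^ T) u w - (Fintype.card (Fin r → H) : ℝ)⁻¹| ≤ 1 / 2 := by
  obtain ⟨r1, hr1, hnum⟩ := numerics1 p hp3
  refine ⟨r1, hr1, fun r hr => ?_⟩
  have hr512 : (512:ℝ) ≤ r := by exact_mod_cast (by omega : 512 ≤ r)
  have hlr : 1 ≤ Real.log r := by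
    rw [Real.le_log_iff_exp_le (by linarith)]
    linarith [Real.exp_one_lt_d9]
  have hrl : 512 ≤ (r:ℝ) * Real.log r := by nlinarith
  have hr2 : 2 ≤ r := by omega
  refine ⟨⌈6 * r * Real.log r⌉₊ + ⌈4096 * r * Real.log r⌉₊, ?_, ?_⟩
  · push_cast
    have h1 := Nat.ceil_lt_add_one (by positivity : 0 ≤ 6 * r * Real.log r)
    have h2 := Nat.ceil_lt_add_one (by positivity : 0 ≤ 4096 * r * Real.log r)
    linarith
  · intro H _ _ _ hc u hu
    have h1 := phase1 (p := p) hc hp3 hr2 ⌈6 * r * Real.log r⌉₊ (Nat.le_ceil _) hu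
    have h2 := hnum r hr ⌈4096 * r * Real.log r⌉₊ (Nat.le_ceil _)
      (Nat.ceil_lt_add_one (by positivity)).le
    generalize ⌈6 * r * Real.log r⌉₊ = T1 at *
    generalize ⌈4096 * r * Real.log r⌉₊ = T2 at *
    set c := (Fintype.card (Fin r → H) : ℝ)⁻¹ with hcdef
    have hX : (0:ℝ) < Fintype.card (Fin r → H) := by exact_mod_cast Fintype.card_pos
    have hc0 : 0 < c := by positivity
    have hcs : ∑ w : Fin r → H, c = 1 := by
      rw [Finset.sum_const, Finset.card_univ, nsmul_eq_mul, hcdef, mul_inv_cancel₀ hX.ne']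
    have hb : ∀ y : Fin r → H, ∑ w, |(paQ p r H ^ T2) y w - c| ≤
        1 / 4 + if 128 * nz y < r then 2 else 0 := by
      intro y
      split_ifs with hy
      · have : ∑ w, |(paQ p r H ^ T2) y w - c| ≤ ∑ w, ((paQ p r H ^ T2) y w + c) := by
          refine Finset.sum_le_sum fun w _ => ?_
          have := pow_nonneg_entry (p := p) hr2 T2 y w
          rw [abs_le]; constructor <;> linarith
        rw [Finset.sum_add_distrib, pow_row_sum hr2, hcs] at this
        linarith
      · have h3 := (phase2b (p := p) hc hp3 hr2 T2 (by omega : r ≤ 128 * nz y)).trans h2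
        have := abs_le_of_sq_le_sq' (by rw [← hcdef] at h3; exact h3.trans (by norm_num : (1:ℝ)/16 ≤ (1/4)^2)) (by norm_num)
        linarith [this.2]
    have e : ∀ w, (paQ p r H ^ (T1 + T2)) u w - c =
        ∑ y, (paQ p r H ^ T1) u y * ((paQ p r H ^ T2) y w - c) := by
      intro w
      rw [pow_add, Matrix.mul_apply]
      simp only [mul_sub]
      rw [Finset.sum_sub_distrib, ← Finset.sum_mul, pow_row_sum hr2, one_mul]
    calc ∑ w, |(paQ p r H ^ (T1 + T2)) u w - c|
        ≤ ∑ w, ∑ y, (paQ p r H ^ T1) u y * |(paQ p r H ^ T2) y w - c| := by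
          refine Finset.sum_le_sum fun w _ => ?_
          rw [e w]
          refine (Finset.abs_sum_le_sum_abs _ _).trans (le_of_eq ?_)
          refine Finset.sum_congr rfl fun y _ => ?_
          rw [abs_mul, abs_of_nonneg (pow_nonneg_entry hr2 T1 u y)]
      _ = ∑ y, (paQ p r H ^ T1) u y * ∑ w, |(paQ p r H ^ T2) y w - c| := by
          rw [Finset.sum_comm]
          simp only [Finset.mul_sum]
      _ ≤ ∑ y, ((paQ p r H ^ T1) u y * (1/4) + 2 * if 128 * nz y < r then (paQ p r H ^ T1) u y else 0) := by
          refine Finset.sum_le_sum fun y _ => ?_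
          have := mul_le_mul_of_nonneg_left (hb y) (pow_nonneg_entry (p := p) hr2 T1 u y)
          refine this.trans (le_of_eq ?_)
          split_ifs <;> ring
      _ ≤ 1 / 2 := by
          rw [Finset.sum_add_distrib, ← Finset.sum_mul, ← Finset.mul_sum, pow_row_sum hr2]
          linarith
end Mix
section Contract
variable {p : ℕ} [hpf : Fact (Nat.Prime p)] {r : ℕ} {H : Type} [Group H] [Fintype H] [DecidableEq H]

theorem keep_osc (hc : Fintype.card H = p) (hr : 2 ≤ r) (s : ℕ) (F : (Fin r → H) → ℝ) (m d : ℝ)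
    (h : ∀ u : Fin r → H, u ≠ (fun _ => 1) → |F u - m| ≤ d) :
    ∀ u : Fin r → H, u ≠ (fun _ => 1) → |(paQ p r H ^ s).mulVec F u - m| ≤ d := by
  intro u hu
  have e : (paQ p r H ^ s).mulVec F u - m = ∑ w, (paQ p r H ^ s) u w * (F w - m) := by
    simp only [mul_sub, Finset.sum_sub_distrib, ← Finset.sum_mul, pow_row_sum hr, one_mul]
    rfl
  rw [e]
  calc _ ≤ ∑ w, |(paQ p r H ^ s) u w * (F w - m)| := Finset.abs_sum_le_sum_abs _ _
    _ ≤ ∑ w, (paQ p r H ^ s) u w * d := by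
      refine Finset.sum_le_sum fun w _ => ?_
      rw [abs_mul, abs_of_nonneg (pow_nonneg_entry hr s u w)]
      by_cases hw : w = fun _ => 1
      · subst hw; rw [pow_to_one hc hr s hu]; simp
      · exact mul_le_mul_of_nonneg_left (h w hw) (pow_nonneg_entry hr s u w)
    _ = d := by rw [← Finset.sum_mul, pow_row_sum hr, one_mul]

theorem contract_osc (hc : Fintype.card H = p) (hr : 2 ≤ r) (T : ℕ)
    (hT : ∀ u : Fin r → H, u ≠ (fun _ => 1) →
      ∑ w, |(paQ p r H ^ T) u w - (Fintype.card (Fin r → H) : ℝ)⁻¹| ≤ 1 / 2)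
    (F : (Fin r → H) → ℝ) (m d : ℝ) (hd : 0 ≤ d)
    (h : ∀ u : Fin r → H, u ≠ (fun _ => 1) → |F u - m| ≤ d) :
    ∃ m', ∀ u : Fin r → H, u ≠ (fun _ => 1) → |(paQ p r H ^ T).mulVec F u - m'| ≤ d / 2 := by
  set c := (Fintype.card (Fin r → H) : ℝ)⁻¹ with hcdef
  refine ⟨m + ∑ w : Fin r → H, if w = (fun _ => 1) then 0 else c * (F w - m), fun u hu => ?_⟩
  have e : (paQ p r H ^ T).mulVec F u - (m + ∑ w : Fin r → H, if w = (fun _ => 1) then 0 else c * (F w - m)) =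
      ∑ w, if w = (fun _ => 1) then 0 else ((paQ p r H ^ T) u w - c) * (F w - m) := by
    have e1 : (paQ p r H ^ T).mulVec F u - m = ∑ w, (paQ p r H ^ T) u w * (F w - m) := by
      simp only [mul_sub, Finset.sum_sub_distrib, ← Finset.sum_mul, pow_row_sum hr, one_mul]
      rfl
    rw [← sub_sub, e1, ← Finset.sum_sub_distrib]
    refine Finset.sum_congr rfl fun w _ => ?_
    split_ifs with hw
    · subst hw; rw [pow_to_one hc hr T hu]; simp
    · ring
  rw [e]
  calc _ ≤ ∑ w : Fin r → H, |if w = (fun _ => 1) then 0 else ((paQ p r H ^ T) u w - c) * (F w - m)| :=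
        Finset.abs_sum_le_sum_abs _ _
    _ ≤ ∑ w, |(paQ p r H ^ T) u w - c| * d := by
      refine Finset.sum_le_sum fun w _ => ?_
      split_ifs with hw
      · simp; positivity
      · rw [abs_mul]
        exact mul_le_mul_of_nonneg_left (h w hw) (abs_nonneg _)
    _ ≤ d / 2 := by
      rw [← Finset.sum_mul]
      have := mul_le_mul_of_nonneg_right (hT u hu) hd
      linarith

theorem iter_osc (hc : Fintype.card H = p) (hr : 2 ≤ r) (T : ℕ)
    (hT : ∀ u : Fin r → H, u ≠ (fun _ => 1) →
      ∑ w, |(paQ p r H ^ T) u w - (Fintype.card (Fin r → H) : ℝ)⁻¹| ≤ 1 / 2)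
    (F : (Fin r → H) → ℝ) (hF0 : ∀ u, 0 ≤ F u) (hF1 : ∀ u, F u ≤ 1) (k : ℕ) :
    ∃ m, ∀ u : Fin r → H, u ≠ (fun _ => 1) → |(paQ p r H ^ (k * T)).mulVec F u - m| ≤ (1/2)^(k+1) := by
  induction k with
  | zero =>
    refine ⟨1/2, fun u _ => ?_⟩
    simp
    rw [abs_le]
    constructor <;> linarith [hF0 u, hF1 u]
  | succ k ih =>
    obtain ⟨m, hm⟩ := ih
    obtain ⟨m', hm'⟩ := contract_osc hc hr T hT _ m _ (by positivity) hm
    refine ⟨m', fun u hu => ?_⟩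
    have := hm' u hu
    rw [Matrix.mulVec_mulVec, ← pow_add] at this
    rw [show (k + 1) * T = T + k * T by ring]
    refine this.trans (le_of_eq ?_)
    rw [pow_succ (1/2:ℝ) (k+1)]; ring

theorem hit_bound (hc : Fintype.card H = p) (hr : 2 ≤ r) (T : ℕ)
    (hT : ∀ u : Fin r → H, u ≠ (fun _ => 1) →
      ∑ w, |(paQ p r H ^ T) u w - (Fintype.card (Fin r → H) : ℝ)⁻¹| ≤ 1 / 2)
    (F : (Fin r → H) → ℝ) (hF0 : ∀ u, 0 ≤ F u) (hF1 : ∀ u, F u ≤ 1) (k t : ℕ) (ht : k * T ≤ t)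
    {u : Fin r → H} (hu : u ≠ (fun _ => 1)) :
    (paQ p r H ^ t).mulVec F u ≤ 2 * ((∑ w, F w) / Fintype.card (Fin r → H)) + (1/2)^k := by
  obtain ⟨m, hm⟩ := iter_osc hc hr T hT F hF0 hF1 k
  have h1 := keep_osc hc hr (t - k * T) _ m _ hm
  rw [Matrix.mulVec_mulVec, ← pow_add, Nat.sub_add_cancel ht] at h1
  have hX : (2:ℝ) ≤ Fintype.card (Fin r → H) := by
    have h2 : 2 ≤ p := hpf.out.two_le
    have : 2 ≤ Fintype.card (Fin r → H) := by
      simp [hc]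
      calc 2 ≤ p := h2
        _ ≤ p ^ r := Nat.le_self_pow (by omega) p
    exact_mod_cast this
  have hpos : ∀ w, 0 ≤ (paQ p r H ^ t).mulVec F w := by
    intro w
    exact Finset.sum_nonneg fun y _ => mul_nonneg (pow_nonneg_entry hr t w y) (hF0 y)
  have hs := pow_col_sum (p := p) (exp_of_card hc) hr t F
  set d : ℝ := (1/2)^(k+1) with hd
  have hlow : ((Fintype.card (Fin r → H) : ℝ) - 1) * (m - d) ≤ ∑ w, F w := by
    rw [← hs, ← Finset.add_sum_erase _ _ (Finset.mem_univ (fun _ : Fin r => (1:H)))]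
    have h5 : ∑ w ∈ univ.erase (fun _ : Fin r => (1:H)), (m - d) ≤
        ∑ w ∈ univ.erase (fun _ : Fin r => (1:H)), (paQ p r H ^ t).mulVec F w := by
      refine Finset.sum_le_sum fun w hw => ?_
      have := (abs_le.1 (h1 w (Finset.ne_of_mem_erase hw))).1
      linarith
    rw [Finset.sum_const, Finset.card_erase_of_mem (Finset.mem_univ _), nsmul_eq_mul,
      Finset.card_univ, Nat.cast_sub Fintype.card_pos, Nat.cast_one] at h5
    linarith [hpos (fun _ => 1)]
  have hu2 := (abs_le.1 (h1 u hu)).2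
  have hS : 0 ≤ ∑ w, F w := Finset.sum_nonneg fun w _ => hF0 w
  have hm2 : m - d ≤ 2 * ((∑ w, F w) / Fintype.card (Fin r → H)) := by
    rw [← mul_div_assoc, le_div_iff₀ (by linarith)]
    rcases le_or_gt (m - d) 0 with h | h
    · nlinarith
    · nlinarith
  have : (1/2:ℝ)^k = 2 * d := by rw [hd, pow_succ]; ring
  rw [this]
  linarith

open Classical in
theorem ind_sum (hc : Fintype.card H = p) (S : Finset (Fin r)) :
    (∑ w : Fin r → H, if ∀ j ∈ S, w j = 1 then (1:ℝ) else 0) / Fintype.card (Fin r → H) =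
      ((p:ℝ)⁻¹) ^ S.card := by
  have hp : (0:ℝ) < p := by exact_mod_cast hpf.out.pos
  have e : ∀ w : Fin r → H, (if ∀ j ∈ S, w j = 1 then (1:ℝ) else 0) =
      ∏ j, (if j ∈ S then (if w j = 1 then 1 else 0) else 1) := by
    intro w
    split_ifs with h
    · symm; apply Finset.prod_eq_one; intro j _
      split_ifs with h1 h2
      · rfl
      · exact absurd (h j h1) h2
      · rfl
    · push Not at h
      obtain ⟨j, hj, hw⟩ := h
      symm; apply Finset.prod_eq_zero (Finset.mem_univ j)
      simp [hj, hw]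
  simp only [e]
  have h := Finset.prod_univ_sum (fun _ : Fin r => (univ : Finset H))
    (fun j x => if j ∈ S then (if x = 1 then (1:ℝ) else 0) else 1)
  rw [Fintype.piFinset_univ] at h
  rw [← h]
  have e2 : ∀ j : Fin r, (∑ x : H, if j ∈ S then (if x = 1 then (1:ℝ) else 0) else 1) =
      (p:ℝ) * (if j ∈ S then (p:ℝ)⁻¹ else 1) := by
    intro j
    split_ifs
    · simp [hp.ne']
    · simp [hc]
  simp only [e2]
  rw [Finset.prod_mul_distrib]
  simp [hc]
  field_simp

open Classical in
theorem hit_S (hc : Fintype.card H = p) (hr : 2 ≤ r) (T : ℕ)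
    (hT : ∀ u : Fin r → H, u ≠ (fun _ => 1) →
      ∑ w, |(paQ p r H ^ T) u w - (Fintype.card (Fin r → H) : ℝ)⁻¹| ≤ 1 / 2)
    (S : Finset (Fin r)) (k t : ℕ) (ht : k * T ≤ t)
    {u : Fin r → H} (hu : u ≠ (fun _ => 1)) :
    (paQ p r H ^ t).mulVec (fun w => if ∀ j ∈ S, w j = 1 then 1 else 0) u ≤
      2 * ((p:ℝ)⁻¹) ^ S.card + (1/2)^k := by
  rw [← ind_sum hc S]
  exact hit_bound hc hr T hT _ (fun u => by split_ifs <;> norm_num)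
    (fun u => by split_ifs <;> norm_num) k t ht hu

end Contract

section Push
variable {p : ℕ} [hpf : Fact (Nat.Prime p)] {r : ℕ} {H : Type*} [Group H] [Fintype H] [DecidableEq H]
  {H' : Type*} [Group H'] [Fintype H'] [DecidableEq H']

theorem push1 (θ : H →* H') (F : (Fin r → H') → ℝ) :
    (paQ p r H).mulVec (fun g => F (fun i => θ (g i))) =
      fun g => (paQ p r H').mulVec F (fun i => θ (g i)) := by
  funext g
  rw [paQ_mulVec, paQ_mulVec]
  congr 2
  refine Finset.sum_congr rfl fun i _ => Finset.sum_congr rfl fun j _ => ?_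
  split_ifs with h
  · congr 1
    · unfold avR mR
      congr 1
      refine Finset.sum_congr rfl fun a _ => ?_
      apply congrArg F
      funext k
      by_cases hk : k = i
      · subst hk; simp
      · simp [Function.update_of_ne hk]
    · unfold avL mL
      congr 1
      refine Finset.sum_congr rfl fun a _ => ?_
      apply congrArg F
      funext k
      by_cases hk : k = i
      · subst hk; simp
      · simp [Function.update_of_ne hk]
  · rfl

theorem push (θ : H →* H') (t : ℕ) (F : (Fin r → H') → ℝ) :
    (paQ p r H ^ t).mulVec (fun g => F (fun i => θ (g i))) =
      fun g => (paQ p r H' ^ t).mulVec F (fun i => θ (g i)) := by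
  induction t generalizing F with
  | zero => simp
  | succ t ih =>
    rw [pow_succ, ← Matrix.mulVec_mulVec, push1, ih, pow_succ, ← Matrix.mulVec_mulVec]

end Push
section Heis
variable {p : ℕ} [hpf : Fact (Nat.Prime p)] {r : ℕ} {W : Type} [AddCommGroup W] [Module (ZMod p) W]
  [Fintype W] [DecidableEq W] [HeisData p W]

theorem hmul (x y : W × ZMod p) :
    x * y = (x.1 + y.1, x.2 + y.2 + (2 : ZMod p)⁻¹ * HeisData.ω x.1 y.1) := rfl

theorem hone : (1 : W × ZMod p) = (0, 0) := rfl

theorem hpow (hω : ∀ v : W, HeisData.ω (p := p) v v = 0) (x : W × ZMod p) (n : ℕ) :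
    x ^ n = ((n : ZMod p) • x.1, (n : ZMod p) * x.2) := by
  induction n with
  | zero => simp [hone]
  | succ n ih =>
    rw [pow_succ, ih, hmul]
    simp [hω, add_smul, add_mul]

theorem hexp (hω : ∀ v : W, HeisData.ω (p := p) v v = 0) (x : W × ZMod p) : x ^ p = 1 := by
  rw [hpow hω, hone]; simp

theorem hpowv (hω : ∀ v : W, HeisData.ω (p := p) v v = 0) (x : W × ZMod p) (a : ZMod p) :
    x ^ a.val = (a • x.1, a * x.2) := by
  rw [hpow hω]; simp

theorem hcentral (s : ZMod p) (x : W × ZMod p) : ((0, s) : W × ZMod p) * x = x * (0, s) := by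
  rw [hmul, hmul]; simp; ring

theorem zmul (s t : ZMod p) : ((0, s) : W × ZMod p) * (0, t) = (0, s + t) := by
  rw [hmul]; simp

def zσ (s : ZMod p) : Equiv.Perm (W × ZMod p) := Equiv.mulRight ((0, s) : W × ZMod p)

theorem zσ_gd : Gd (zσ (p := p) (W := W)) where
  one := ⟨0, fun x => by
    show x * ((0,0) : W × ZMod p) = x
    rw [← hone, mul_one]⟩
  reix b := ⟨Equiv.addLeft b, fun a x => by
    show x * (0, b) * (0, a) = x * (0, b + a)
    rw [mul_assoc, zmul]⟩

theorem zσ_comm (g : W × ZMod p) (a b : ZMod p) (x : W × ZMod p) :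
    rp p g a (zσ b x) = zσ b (rp p g a x) := by
  show x * (0, b) * g ^ a.val = x * g ^ a.val * (0, b)
  rw [mul_assoc, hcentral, mul_assoc]

def tr (w : W) (a : ZMod p) : Equiv.Perm W := Equiv.addRight (a • w)

theorem tr_gd (w : W) : Gd (tr (p := p) w) where
  one := ⟨0, fun x => by simp [tr]⟩
  reix b := ⟨Equiv.addLeft b, fun a x => by simp [tr, add_smul, add_assoc]⟩

theorem tr_comm (w w' : W) (a b : ZMod p) (x : W) : tr w a (tr w' b x) = tr w' b (tr w a x) := by
  simp [tr]; abel

theorem SS_prod (Φ : W → ℝ) : SS (fun x : W × ZMod p => Φ x.1) = p * SS Φ := by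
  unfold SS
  rw [Fintype.sum_prod_type]
  simp [Finset.mul_sum]

theorem inv_span {F : W → ℝ} {S : Set W} (hS : Submodule.span (ZMod p) S = ⊤)
    (h : ∀ w ∈ S, ∀ (a : ZMod p) v, F (v + a • w) = F v) (v v' : W) : F v = F v' := by
  have : ∀ w : W, ∀ (a : ZMod p) v, F (v + a • w) = F v := by
    intro w
    have hw : w ∈ Submodule.span (ZMod p) S := by rw [hS]; trivial
    induction hw using Submodule.span_induction with
    | mem x hx => exact h x hx
    | zero => intro a v; simp
    | add x y _ _ hx hy => intro a v; rw [smul_add, ← add_assoc, hy, hx]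
    | smul c x _ hx => intro a v; rw [smul_smul, hx]
  have h1 := this (v - v') 1 v'
  rw [← h1]; simp

theorem heis_a (hω : ∀ v : W, HeisData.ω (p := p) v v = 0) (g : Fin r → W × ZMod p)
    (B : Finset (Fin r)) (hB : Submodule.span (ZMod p) ((fun j => (g j).1) '' (B : Set (Fin r))) = ⊤)
    {φ : W × ZMod p → ℝ} (hφ : ∀ x, 0 ≤ φ x) :
    SS (av zσ φ) - SS (av ra φ) ≤ ∑ j ∈ B, (SS φ - SS (av (rp p (g j)) φ)) := by
  have hp : (0:ℝ) < p := by exact_mod_cast hpf.out.pos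
  set ψ := av zσ φ with hψ
  set Φ : W → ℝ := fun v => ψ (v, 0) with hΦ
  have hψ0 : ∀ x, 0 ≤ ψ x := av_nonneg _ hφ
  have hψΦ : ψ = fun x => Φ x.1 := by
    funext x
    have h1 := av_inv zσ_gd φ x.2 (x.1, 0)
    have h2 : zσ x.2 (x.1, 0) = x := by
      show (x.1, (0:ZMod p)) * (0, x.2) = x
      rw [hmul]; simp
    rw [h2] at h1
    exact h1
  have hav : ∀ k : W × ZMod p, av (rp p k) ψ = fun x => av (tr (p := p) k.1) Φ x.1 := by
    intro k
    funext x
    unfold av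
    congr 1
    refine Finset.sum_congr rfl fun a _ => ?_
    rw [hψΦ]
    show Φ (x * k ^ a.val).1 = Φ (x.1 + a • k.1)
    rw [hpowv hω, hmul]
  obtain ⟨h1, -, h3, h4⟩ := tensor (fun j : Fin r => tr (p := p) (g j).1) (fun j => tr_gd _)
    (fun j k a b x _ => tr_comm _ _ a b x) (φ := Φ) (fun v => hψ0 _) B.toList B.nodup_toList
  have hsum : ∀ l : List (Fin r), ∑ x, l.foldr (fun j f => av (tr (p := p) (g j).1) f) Φ x = ∑ x, Φ x := by
    intro l
    induction l with
    | nil => rfl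
    | cons k l ih => rw [List.foldr_cons, sum_av_one (tr_gd _), ih]
  have hs := hsum B.toList
  generalize B.toList.foldr (fun j f => av (tr (p := p) (g j).1) f) Φ = F at *
  have hc := inv_span (F := F) hB (fun w hw a v => by
    obtain ⟨j, hj, rfl⟩ := hw
    exact h3 j (by simpa using hj) a v)
  have hF : av ra φ = fun x : W × ZMod p => F x.1 := by
    funext x
    have e1 : ∑ y : W × ZMod p, φ (ra y x) = ∑ y, φ y := by
      show ∑ y : W × ZMod p, φ (x * y) = _
      exact Equiv.sum_comp (Equiv.mulLeft x) φ
    unfold av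
    rw [e1, ← sum_av_one zσ_gd φ, ← hψ, hψΦ, Fintype.sum_prod_type]
    simp only [sum_const, card_univ, ZMod.card, nsmul_eq_mul]
    rw [← Finset.mul_sum, ← hs]
    have e2 : ∑ v, F v = Fintype.card W * F x.1 := by
      rw [Finset.sum_congr rfl fun v _ => hc v x.1]
      simp
    have hW : (0:ℝ) < Fintype.card W := by exact_mod_cast Fintype.card_pos
    rw [e2, Fintype.card_prod, ZMod.card]
    push_cast
    field_simp
  have e3 : SS ψ - SS (av ra φ) = p * (SS Φ - SS F) := by
    rw [hF, hψΦ, SS_prod, SS_prod]; ring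
  rw [e3]
  rw [Finset.sum_map_toList] at h4
  calc _ ≤ p * ∑ j ∈ B, (SS Φ - SS (av (tr (p := p) (g j).1) Φ)) := mul_le_mul_of_nonneg_left h4 hp.le
    _ = ∑ j ∈ B, (SS ψ - SS (av (rp p (g j)) ψ)) := by
      rw [Finset.mul_sum]
      refine Finset.sum_congr rfl fun j _ => ?_
      rw [hav, SS_prod]
      conv_rhs => rw [hψΦ, SS_prod]
      ring
    _ ≤ _ := by
      refine Finset.sum_le_sum fun j _ => ?_
      exact ssa (rp_gd (hexp hω) (g j)) zσ_gd (fun a b x => zσ_comm (g j) a b x) hφ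

def dd {H : Type*} [Group H] [Fintype H] (φ : H → ℝ) (g : H) : ℝ := ∑ x, (√(φ (x * g)) - √(φ x)) ^ 2

theorem dd_mul {H : Type*} [Group H] [Fintype H] (φ : H → ℝ) (g h : H) :
    dd φ (g * h) ≤ 2 * dd φ g + 2 * dd φ h := by
  have e : dd φ h = ∑ x, (√(φ (x * g * h)) - √(φ (x * g))) ^ 2 :=
    (Equiv.sum_comp (Equiv.mulRight g) (fun x => (√(φ (x * h)) - √(φ x)) ^ 2)).symm
  rw [e]
  unfold dd
  rw [Finset.mul_sum, Finset.mul_sum, ← Finset.sum_add_distrib]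
  refine Finset.sum_le_sum fun x _ => ?_
  rw [← mul_assoc]
  nlinarith [sq_nonneg ((√(φ (x * g * h)) - √(φ (x * g))) - (√(φ (x * g)) - √(φ x)))]

theorem dd_inv {H : Type*} [Group H] [Fintype H] (φ : H → ℝ) (g : H) :
    dd φ g⁻¹ = dd φ g := by
  have e : dd φ g⁻¹ = ∑ x, (√(φ (x * g * g⁻¹)) - √(φ (x * g))) ^ 2 :=
    (Equiv.sum_comp (Equiv.mulRight g) (fun x => (√(φ (x * g⁻¹)) - √(φ x)) ^ 2)).symm
  rw [e]
  unfold dd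
  refine Finset.sum_congr rfl fun x _ => ?_
  rw [mul_inv_cancel_right]; ring

theorem ω_anti (hω : ∀ v : W, HeisData.ω (p := p) v v = 0) (v w : W) :
    HeisData.ω (p := p) w v = - HeisData.ω (p := p) v w := by
  have := hω (v + w)
  simp [hω] at this
  rw [eq_neg_iff_add_eq_zero]
  linear_combination this

theorem comm_eq (hp2 : p ≠ 2) (hω : ∀ v : W, HeisData.ω (p := p) v v = 0) (x y : W × ZMod p) :
    ((0, HeisData.ω x.1 y.1) : W × ZMod p) = (x⁻¹ * y⁻¹) * (x * y) := by
  have h : x * y = y * x * (0, HeisData.ω x.1 y.1) := by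
    simp only [hmul]
    rw [ω_anti hω x.1 y.1]
    refine Prod.ext ?_ ?_
    · simp [add_comm]
    · simp
      have h2 : (2 : ZMod p) ≠ 0 := by
        intro h
        have h3 : ((2:ℕ) : ZMod p) = 0 := by exact_mod_cast h
        rw [ZMod.natCast_eq_zero_iff] at h3
        exact hp2 ((Nat.prime_dvd_prime_iff_eq hpf.out Nat.prime_two).1 h3)
      field_simp
      ring
  rw [h]
  group

theorem dd_pow (hω : ∀ v : W, HeisData.ω (p := p) v v = 0) {φ : W × ZMod p → ℝ} (hφ : ∀ x, 0 ≤ φ x)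
    (g : W × ZMod p) (a : ZMod p) : dd φ (g ^ a.val) ≤ 4 * (SS φ - SS (av (rp p g) φ)) :=
  shift_le (rp p g) (rp_gd (hexp hω) g) hφ a

theorem heis_local (hp2 : p ≠ 2) (hω : ∀ v : W, HeisData.ω (p := p) v v = 0)
    (hne : ∃ v w : W, HeisData.ω (p := p) v w ≠ 0) (g : Fin r → W × ZMod p)
    (B : Finset (Fin r)) (hB : Submodule.span (ZMod p) ((fun j => (g j).1) '' (B : Set (Fin r))) = ⊤)
    {φ : W × ZMod p → ℝ} (hφ : ∀ x, 0 ≤ φ x) :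
    SS φ - SS (av ra φ) ≤ (1 + 128 * p) * ∑ j ∈ B, (SS φ - SS (av (rp p (g j)) φ)) := by
  have hp : (0:ℝ) < p := by exact_mod_cast hpf.out.pos
  have hD : ∀ j, 0 ≤ SS φ - SS (av (rp p (g j)) φ) := fun j => by
    linarith [SS_av_le _ (rp_gd (hexp hω) (g j)) hφ]
  obtain ⟨j, hj, k, hk, hjk⟩ : ∃ j ∈ B, ∃ k ∈ B, HeisData.ω (p := p) (g j).1 (g k).1 ≠ 0 := by
    by_contra hcon
    push Not at hcon
    obtain ⟨v, w, hvw⟩ := hne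
    apply hvw
    have : (HeisData.ω : W →ₗ[ZMod p] W →ₗ[ZMod p] ZMod p) = 0 := by
      apply LinearMap.ext_on hB
      rintro _ ⟨j, hj, rfl⟩
      apply LinearMap.ext_on hB
      rintro _ ⟨k, hk, rfl⟩
      simpa using hcon j (by simpa using hj) k (by simpa using hk)
    rw [this]; rfl
  have hne' : j ≠ k := by rintro rfl; exact hjk (hω _)
  have hz : ∀ s : ZMod p, dd φ ((0, s) : W × ZMod p) ≤
      32 * ((SS φ - SS (av (rp p (g j)) φ)) + (SS φ - SS (av (rp p (g k)) φ))) := by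
    intro s
    have e := comm_eq hp2 hω (g j ^ (s / HeisData.ω (g j).1 (g k).1 : ZMod p).val) (g k ^ (1 : ZMod p).val)
    have e2 : HeisData.ω (p := p) (g j ^ (s / HeisData.ω (g j).1 (g k).1 : ZMod p).val).1 (g k ^ (1 : ZMod p).val).1 = s := by
      rw [hpowv hω, hpowv hω]
      simp [hjk]
    rw [e2] at e
    have d1 := dd_pow hω hφ (g j) (s / HeisData.ω (g j).1 (g k).1)
    have d2 := dd_pow hω hφ (g k) 1
    rw [e]
    generalize g j ^ (s / HeisData.ω (g j).1 (g k).1 : ZMod p).val = x at *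
    generalize g k ^ (1 : ZMod p).val = y at *
    have h1 := dd_mul φ (x⁻¹ * y⁻¹) (x * y)
    have h2 := dd_mul φ x⁻¹ y⁻¹
    have h3 := dd_mul φ x y
    rw [dd_inv, dd_inv] at h2
    linarith
  have hb : SS φ - SS (av zσ φ) ≤ 128 * p * ∑ j ∈ B, (SS φ - SS (av (rp p (g j)) φ)) := by
    have h1 := ent_le_sq zσ zσ_gd hφ
    have h2 : ∑ s : ZMod p, ∑ x, (√(φ (zσ s x)) - √(φ x)) ^ 2 ≤
        ∑ s : ZMod p, 32 * ((SS φ - SS (av (rp p (g j)) φ)) + (SS φ - SS (av (rp p (g k)) φ))) :=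
      Finset.sum_le_sum fun s _ => hz s
    rw [Finset.sum_const, Finset.card_univ, ZMod.card, nsmul_eq_mul] at h2
    have h3 : (SS φ - SS (av (rp p (g j)) φ)) + (SS φ - SS (av (rp p (g k)) φ)) ≤
        ∑ j ∈ B, (SS φ - SS (av (rp p (g j)) φ)) := by
      rw [← Finset.sum_pair hne' (f := fun j => SS φ - SS (av (rp p (g j)) φ))]
      apply Finset.sum_le_sum_of_subset_of_nonneg
      · intro x hx; simp at hx; rcases hx with rfl | rfl <;> assumption
      · intro x _ _; exact hD x
    have h4 := mul_le_mul_of_nonneg_left h3 (by positivity : 0 ≤ 128 * (p:ℝ))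
    linarith
  have ha := heis_a hω g B hB hφ
  linarith

end Heis
section Blocks
variable {p : ℕ} [hpf : Fact (Nat.Prime p)] {r : ℕ} {W : Type} [AddCommGroup W] [Module (ZMod p) W]
  [Fintype W] [DecidableEq W] [HeisData p W]

def thx (ξ : W →ₗ[ZMod p] ZMod p) : W × ZMod p →* Multiplicative (ZMod p) where
  toFun x := Multiplicative.ofAdd (ξ x.1)
  map_one' := by rw [hone]; simp
  map_mul' x y := by rw [hmul]; simp

theorem thx_eq_one (ξ : W →ₗ[ZMod p] ZMod p) (x : W × ZMod p) : thx ξ x = 1 ↔ ξ x.1 = 0 := by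
  show Multiplicative.ofAdd (ξ x.1) = 1 ↔ _
  simp

theorem thx_ne {ξ : W →ₗ[ZMod p] ZMod p} (hξ : ξ ≠ 0) {x : Fin r → W × ZMod p}
    (hx : x ∈ genSet r (W × ZMod p)) : (fun i => thx ξ (x i)) ≠ fun _ => 1 := by
  intro h
  apply hξ
  have h1 : Subgroup.closure (Set.range x) ≤ (thx ξ).ker := by
    rw [Subgroup.closure_le]
    rintro _ ⟨i, rfl⟩
    exact congrFun h i
  have hx : Subgroup.closure (Set.range x) = ⊤ := hx
  rw [hx, top_le_iff] at h1
  ext w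
  have : ((w, 0) : W × ZMod p) ∈ (thx ξ).ker := by rw [h1]; trivial
  rw [MonoidHom.mem_ker, thx_eq_one] at this
  simpa using this

open Classical in
theorem bad_mass (hr : 2 ≤ r) (T : ℕ)
    (hT : ∀ u : Fin r → Multiplicative (ZMod p), u ≠ (fun _ => 1) →
      ∑ w, |(paQ p r (Multiplicative (ZMod p)) ^ T) u w -
        (Fintype.card (Fin r → Multiplicative (ZMod p)) : ℝ)⁻¹| ≤ 1 / 2)
    (S : Finset (Fin r)) (k t : ℕ) (ht : k * T ≤ t)
    {x : Fin r → W × ZMod p} (hx : x ∈ genSet r (W × ZMod p)) :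
    ∑ g, (if Submodule.span (ZMod p) ((fun j => (g j).1) '' (S : Set (Fin r))) = ⊤ then 0
      else (paQ p r (W × ZMod p) ^ t) x g) ≤
      (p:ℝ) ^ (Module.finrank (ZMod p) W) * (2 * ((p:ℝ)⁻¹) ^ S.card + (1/2)^k) := by
  have hcd : Fintype.card (Multiplicative (ZMod p)) = p := by simp [ZMod.card]
  have : Finite (W →ₗ[ZMod p] ZMod p) := 
    Finite.of_injective (fun f : W →ₗ[ZMod p] ZMod p => (f : W → ZMod p)) DFunLike.coe_injective
  have : Fintype (W →ₗ[ZMod p] ZMod p) := Fintype.ofFinite _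
  set β := 2 * ((p:ℝ)⁻¹) ^ S.card + (1/2:ℝ)^k with hβ
  have hβ0 : 0 ≤ β := by positivity
  have hξ : ∀ ξ : W →ₗ[ZMod p] ZMod p, ξ ≠ 0 →
      ∑ g, (paQ p r (W × ZMod p) ^ t) x g * (if ∀ j ∈ S, thx ξ (g j) = 1 then (1:ℝ) else 0) ≤ β := by
    intro ξ hξ
    have h1 := hit_S hcd hr T hT S k t ht (thx_ne hξ hx)
    have h2 := congrFun (push (p := p) (r := r) (thx ξ) t (fun w => if ∀ j ∈ S, w j = 1 then (1:ℝ) else 0)) x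
    rw [← h2] at h1
    exact h1
  have hcard : (Fintype.card (W →ₗ[ZMod p] ZMod p) : ℝ) = (p:ℝ) ^ (Module.finrank (ZMod p) W) := by
    have h1 := Module.card_eq_pow_finrank (K := ZMod p) (V := (W →ₗ[ZMod p] ZMod p))
    have h2 : Module.finrank (ZMod p) (W →ₗ[ZMod p] ZMod p) = Module.finrank (ZMod p) W :=
      Subspace.dual_finrank_eq
    rw [h1, ZMod.card, h2]
    push_cast; rfl
  have hmain : ∀ g : Fin r → W × ZMod p, (if Submodule.span (ZMod p) ((fun j => (g j).1) '' (S : Set (Fin r))) = ⊤ then 0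
      else (paQ p r (W × ZMod p) ^ t) x g) ≤ ∑ ξ : W →ₗ[ZMod p] ZMod p,
        if ξ = 0 then 0 else (paQ p r (W × ZMod p) ^ t) x g * (if ∀ j ∈ S, thx ξ (g j) = 1 then (1:ℝ) else 0) := by
    intro g
    have hq := pow_nonneg_entry (p := p) hr t x g
    have hnn : ∀ ξ : W →ₗ[ZMod p] ZMod p, 0 ≤ if ξ = 0 then 0 else (paQ p r (W × ZMod p) ^ t) x g * (if ∀ j ∈ S, thx ξ (g j) = 1 then (1:ℝ) else 0) := by
      intro ξ
      split_ifs <;> simp [hq]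
    split_ifs with h
    · exact Finset.sum_nonneg fun ξ _ => hnn ξ
    · obtain ⟨ξ, h1, h2⟩ := Submodule.exists_le_ker_of_lt_top _ (lt_top_iff_ne_top.2 h)
      refine le_trans (le_of_eq ?_) (Finset.single_le_sum (fun ξ _ => hnn ξ) (Finset.mem_univ ξ))
      have h3 : ∀ j ∈ S, thx ξ (g j) = 1 := by
        intro j hj
        rw [thx_eq_one]
        exact h2 (Submodule.subset_span ⟨j, hj, rfl⟩)
      rw [if_neg h1, if_pos h3, mul_one]
  refine (Finset.sum_le_sum fun g _ => hmain g).trans ?_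
  rw [Finset.sum_comm, ← hcard, ← nsmul_eq_mul, ← Finset.card_univ]
  apply Finset.sum_le_card_nsmul
  intro ξ _
  by_cases h0 : ξ = 0
  · simp [h0, hβ0]
  · simp only [h0, if_false]
    exact hξ ξ h0

def Blk (r b k : ℕ) : Finset (Fin r) := univ.filter fun j => j.val / b = k

theorem Blk_card {b k N : ℕ} (hb : 0 < b) (hk : k < N) (hN : N * b ≤ r) : b ≤ (Blk r b k).card := by
  have h1 : ∀ a, a < b → k * b + a < r := by
    intro a ha
    have : (k + 1) * b ≤ N * b := Nat.mul_le_mul_right b hk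
    nlinarith
  have := Finset.card_le_card_of_injOn (s := (univ : Finset (Fin b))) (t := Blk r b k)
    (fun a => ⟨k * b + a.val, h1 a.val a.isLt⟩)
    (fun a _ => by
      simp only [Blk, coe_filter, mem_univ, true_and, Set.mem_setOf_eq]
      rw [mul_comm, Nat.mul_add_div hb, Nat.div_eq_of_lt a.isLt, add_zero])
    (fun a _ a' _ h => by
      simp at h
      exact Fin.ext h)
  simpa using this

theorem upd_img (i : Fin r) (g : Fin r → W × ZMod p) (y : W × ZMod p) (S : Finset (Fin r)) (hS : i ∉ S) :
    (fun j => (Function.update g i y j).1) '' (S : Set (Fin r)) = (fun j => (g j).1) '' (S : Set (Fin r)) := by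
  apply Set.image_congr
  intro j hj
  have : j ≠ i := by rintro rfl; exact hS hj
  simp [Function.update_of_ne this]

open Classical in
theorem heis_mix (hp2 : p ≠ 2) (hω : ∀ v : W, HeisData.ω (p := p) v v = 0)
    (hne : ∃ v w : W, HeisData.ω (p := p) v w ≠ 0) (hr : 2 ≤ r) (T : ℕ)
    (hT : ∀ u : Fin r → Multiplicative (ZMod p), u ≠ (fun _ => 1) →
      ∑ w, |(paQ p r (Multiplicative (ZMod p)) ^ T) u w -
        (Fintype.card (Fin r → Multiplicative (ZMod p)) : ℝ)⁻¹| ≤ 1 / 2)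
    {x : Fin r → W × ZMod p} (hx : x ∈ genSet r (W × ZMod p)) (b N k T3 : ℕ) (hb : 0 < b)
    (hN : N * b ≤ r) :
    (∑ g, |(paQ p r (W × ZMod p) ^ (k * T + T3)) x g - (Fintype.card (Fin r → W × ZMod p) : ℝ)⁻¹|) ^ 2 ≤
      4 * (Real.exp (- ((N / (1 + 128 * p)) / (4 * r * ((r : ℝ) - 1)) * T3)) *
          (r * Real.log (Fintype.card (W × ZMod p))) +
        Real.log (Fintype.card (W × ZMod p)) * (r * (N * ((p:ℝ) ^ (Module.finrank (ZMod p) W) *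
          (2 * ((p:ℝ)⁻¹) ^ (b - 1) + (1/2)^k))))) := by
  have h2 : (2 : ℝ) ≤ r := by exact_mod_cast hr
  have hr1 : (0:ℝ) < (r : ℝ) - 1 := by linarith
  have hr0 : (0:ℝ) < (r : ℝ) := by linarith
  have hp0 : (0:ℝ) < p := by exact_mod_cast hpf.out.pos
  have hp1 : (1:ℝ) ≤ p := by exact_mod_cast hpf.out.one_le
  have hK : (0:ℝ) < 1 + 128 * p := by positivity
  have hNr : (N:ℝ) ≤ r := by
    exact_mod_cast le_trans (Nat.le_mul_of_pos_right N hb) hN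
  have hL : 0 ≤ Real.log (Fintype.card (W × ZMod p)) := Real.log_natCast_nonneg _
  set β := (p:ℝ) ^ (Module.finrank (ZMod p) W) * (2 * ((p:ℝ)⁻¹) ^ (b - 1) + (1/2:ℝ)^k) with hβ
  have hβ0 : 0 ≤ β := by positivity
  refine ent_iter (hexp hω) hr (N / (1 + 128 * p)) (by positivity) ?_
    (fun i g => ∀ l < N, Submodule.span (ZMod p)
      ((fun j => (g j).1) '' (((Blk r b l).erase i : Finset (Fin r)) : Set (Fin r))) = ⊤) ?_ ?_
    x _ (k * T) (by positivity) T3 ?_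
  · rw [div_le_one (by positivity)]
    have : (N:ℝ) / (1 + 128 * p) ≤ r := by
      rw [div_le_iff₀ hK]; nlinarith
    nlinarith
  · intro i g y
    refine forall_congr' fun l => forall_congr' fun _ => ?_
    rw [upd_img i g y _ (Finset.notMem_erase i _)]
  · intro i g hg φ hφ
    have hD : ∀ j, 0 ≤ SS φ - SS (av (rp p (g j)) φ) := fun j => by
      linarith [SS_av_le _ (rp_gd (hexp hω) (g j)) hφ]
    have h3 : ∑ l ∈ range N, (SS φ - SS (av ra φ)) ≤ ∑ l ∈ range N, (1 + 128 * (p:ℝ)) *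
        ∑ j ∈ (Blk r b l).erase i, (SS φ - SS (av (rp p (g j)) φ)) := by
      refine Finset.sum_le_sum fun l hl => ?_
      exact heis_local hp2 hω hne g _ (hg l (Finset.mem_range.1 hl)) hφ
    rw [Finset.sum_const, card_range, nsmul_eq_mul, ← Finset.mul_sum] at h3
    rw [div_mul_eq_mul_div, div_le_iff₀ hK]
    refine h3.trans ?_
    rw [mul_comm]
    apply mul_le_mul_of_nonneg_right _ hK.le
    have e : ∀ l, ∑ j ∈ (Blk r b l).erase i, (SS φ - SS (av (rp p (g j)) φ)) =
        ∑ j : Fin r, if j.val / b = l then (if i ≠ j then (SS φ - SS (av (rp p (g j)) φ)) else 0) else 0 := by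
      intro l
      have : (Blk r b l).erase i = univ.filter fun j : Fin r => j.val / b = l ∧ i ≠ j := by
        ext j
        simp only [Blk, mem_erase, mem_filter, mem_univ, true_and, ne_eq]
        constructor
        · rintro ⟨h1, h2⟩; exact ⟨h2, fun h => h1 h.symm⟩
        · rintro ⟨h1, h2⟩; exact ⟨fun h => h2 h.symm, h1⟩
      rw [this, Finset.sum_filter]
      refine Finset.sum_congr rfl fun j _ => ?_
      rw [ite_and]
    simp only [e]
    rw [Finset.sum_comm]
    refine Finset.sum_le_sum fun j _ => ?_
    rw [Finset.sum_ite_eq]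
    have : 0 ≤ if i ≠ j then (SS φ - SS (av (rp p (g j)) φ)) else 0 := by
      split_ifs
      · exact hD j
      · exact le_rfl
    split_ifs at this ⊢ <;> first | exact le_rfl | exact this
  · intro t ht _
    apply mul_le_mul_of_nonneg_left _ hL
    have hi : ∀ i : Fin r, ∑ g, (if ∀ l < N, Submodule.span (ZMod p)
      ((fun j => (g j).1) '' (((Blk r b l).erase i : Finset (Fin r)) : Set (Fin r))) = ⊤ then 0
        else (paQ p r (W × ZMod p) ^ t) x g) ≤ N * β := by
      intro i
      have h4 : ∀ g : Fin r → W × ZMod p, (if ∀ l < N, Submodule.span (ZMod p)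
          ((fun j => (g j).1) '' (((Blk r b l).erase i : Finset (Fin r)) : Set (Fin r))) = ⊤ then 0
        else (paQ p r (W × ZMod p) ^ t) x g) ≤ ∑ l ∈ range N, (if Submodule.span (ZMod p)
          ((fun j => (g j).1) '' (((Blk r b l).erase i : Finset (Fin r)) : Set (Fin r))) = ⊤ then 0
        else (paQ p r (W × ZMod p) ^ t) x g) := by
        intro g
        have hq := pow_nonneg_entry (p := p) hr t x g
        have hnn : ∀ l ∈ range N, 0 ≤ (if Submodule.span (ZMod p)
          ((fun j => (g j).1) '' (((Blk r b l).erase i : Finset (Fin r)) : Set (Fin r))) = ⊤ then 0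
        else (paQ p r (W × ZMod p) ^ t) x g) := by
          intro l _
          split_ifs <;> simp [hq]
        split_ifs with h
        · exact Finset.sum_nonneg hnn
        · push Not at h
          obtain ⟨l, hl, hs⟩ := h
          refine le_trans (le_of_eq ?_) (Finset.single_le_sum hnn (Finset.mem_range.2 hl))
          rw [if_neg hs]
      refine (Finset.sum_le_sum fun g _ => h4 g).trans ?_
      rw [Finset.sum_comm]
      have h5 : ∀ l ∈ range N, ∑ g, (if Submodule.span (ZMod p)
          ((fun j => (g j).1) '' (((Blk r b l).erase i : Finset (Fin r)) : Set (Fin r))) = ⊤ then 0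
        else (paQ p r (W × ZMod p) ^ t) x g) ≤ β := by
        intro l hl
        refine (bad_mass hr T hT ((Blk r b l).erase i) k t ht hx).trans ?_
        apply mul_le_mul_of_nonneg_left _ (by positivity)
        have hcb : b - 1 ≤ ((Blk r b l).erase i).card := by
          have h6 := Blk_card (r := r) hb (Finset.mem_range.1 hl) hN
          have h7 := Finset.pred_card_le_card_erase (s := Blk r b l) (a := i)
          omega
        have h8 : ((p:ℝ)⁻¹) ^ ((Blk r b l).erase i).card ≤ ((p:ℝ)⁻¹) ^ (b - 1) :=
          pow_le_pow_of_le_one (by positivity) (inv_le_one_of_one_le₀ hp1) hcb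
        linarith
      refine (Finset.sum_le_card_nsmul _ _ _ h5).trans (le_of_eq ?_)
      rw [card_range, nsmul_eq_mul]
    refine le_trans (le_of_eq ?_)
      ((Finset.sum_le_card_nsmul univ _ _ (fun i _ => hi i)).trans (le_of_eq ?_))
    · refine sum_congr rfl fun i _ => sum_congr rfl fun g _ => ?_
      congr
    · simp

end Blocks
section Supp
variable {p : ℕ} [hpf : Fact (Nat.Prime p)] {r : ℕ} {H : Type*} [Group H] [Fintype H] [DecidableEq H]

theorem gen_of_mR (i j : Fin r) (a : ZMod p) (g : Fin r → H) (h : mR i j a g ∈ genSet r H) :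
    g ∈ genSet r H := by
  have h' : Subgroup.closure (Set.range (mR i j a g)) = ⊤ := h
  show Subgroup.closure (Set.range g) = ⊤
  rw [eq_top_iff, ← h', Subgroup.closure_le]
  have hm : ∀ k, g k ∈ Subgroup.closure (Set.range g) := fun k =>
    Subgroup.subset_closure ⟨k, rfl⟩
  rintro _ ⟨k, rfl⟩
  unfold mR
  by_cases hk : k = i
  · subst hk
    rw [Function.update_self]
    exact Subgroup.mul_mem _ (hm _) (Subgroup.pow_mem _ (hm _) _)
  · rw [Function.update_of_ne hk]
    exact hm k

theorem gen_of_mL (i j : Fin r) (a : ZMod p) (g : Fin r → H) (h : mL i j a g ∈ genSet r H) :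
    g ∈ genSet r H := by
  have h' : Subgroup.closure (Set.range (mL i j a g)) = ⊤ := h
  show Subgroup.closure (Set.range g) = ⊤
  rw [eq_top_iff, ← h', Subgroup.closure_le]
  have hm : ∀ k, g k ∈ Subgroup.closure (Set.range g) := fun k =>
    Subgroup.subset_closure ⟨k, rfl⟩
  rintro _ ⟨k, rfl⟩
  unfold mL
  by_cases hk : k = i
  · subst hk
    rw [Function.update_self]
    exact Subgroup.mul_mem _ (Subgroup.pow_mem _ (hm _) _) (hm _)
  · rw [Function.update_of_ne hk]
    exact hm k

theorem pow_supp (hexp : ∀ g : H, g ^ p = 1) {x : Fin r → H} (hx : x ∈ genSet r H) (t : ℕ) :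
    ∀ g, g ∉ genSet r H → (paQ p r H ^ t) x g = 0 := by
  induction t with
  | zero =>
    intro g hg
    rw [pow_zero, Matrix.one_apply_ne]
    rintro rfl; exact hg hx
  | succ t ih =>
    intro g hg
    rw [paQ_pow_succ_row hexp t x, paQ_mulVec, ih g hg]
    have : ∀ i j : Fin r, (if i ≠ j then (avR p i j ((paQ p r H ^ t) x) g +
        avL p i j ((paQ p r H ^ t) x) g) else 0) = 0 := by
      intro i j
      have h1 : avR p i j ((paQ p r H ^ t) x) g = 0 := by
        unfold avR
        rw [Finset.sum_eq_zero, mul_zero]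
        intro a _
        exact ih _ (fun h => hg (gen_of_mR i j a g h))
      have h2 : avL p i j ((paQ p r H ^ t) x) g = 0 := by
        unfold avL
        rw [Finset.sum_eq_zero, mul_zero]
        intro a _
        exact ih _ (fun h => hg (gen_of_mL i j a g h))
      rw [h1, h2]; simp
    simp only [this]
    simp

theorem tv_of_unif {X : Type*} [Fintype X] (q : X → ℝ) (G : Set X) (hG : G.Nonempty)
    (hq1 : ∑ x, q x = 1) (hq0 : ∀ x, x ∉ G → q x = 0)
    (hs : ∑ x, |q x - (Fintype.card X : ℝ)⁻¹| ≤ 1 / 4) : tvDist q (unifOn G) ≤ 1 / 4 := by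
  classical
  have hGc : 0 < Nat.card G := by
    haveI := hG.to_subtype
    exact Nat.card_pos
  have hle : Nat.card G ≤ Fintype.card X := by
    rw [Nat.card_eq_fintype_card]; exact Fintype.card_subtype_le _
  have hu1 : ∑ x, unifOn G x = 1 := by
    unfold unifOn
    rw [← Finset.sum_filter, Finset.sum_const, nsmul_eq_mul]
    have : (univ.filter (· ∈ G)).card = Nat.card G := by
      rw [Nat.card_eq_fintype_card, Fintype.card_subtype]
    rw [this]
    have : (Nat.card G : ℝ) ≠ 0 := by exact_mod_cast hGc.ne'
    field_simp
  set c : ℝ := (Fintype.card X : ℝ)⁻¹ with hc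
  have hc0 : 0 ≤ c := by positivity
  have hXpos : 0 < Fintype.card X := lt_of_lt_of_le hGc hle
  have hcu : c ≤ (Nat.card G : ℝ)⁻¹ := by
    rw [hc]
    apply inv_anti₀
    · exact_mod_cast hGc
    · exact_mod_cast hle
  have hc1 : ∑ x : X, c = 1 := by
    rw [Finset.sum_const, card_univ, nsmul_eq_mul, hc]
    have : (Fintype.card X : ℝ) ≠ 0 := by exact_mod_cast hXpos.ne'
    field_simp
  have hpt : ∀ x, |c - unifOn G x| + (c - unifOn G x) ≤ |q x - c| - (q x - c) := by
    intro x
    by_cases hx : x ∈ G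
    · have : unifOn G x = (Nat.card G : ℝ)⁻¹ := by simp [unifOn, hx]
      rw [this, abs_of_nonpos (by linarith)]
      have := le_abs_self (q x - c)
      linarith
    · have : unifOn G x = 0 := by simp [unifOn, hx]
      rw [this, hq0 x hx, sub_zero, abs_of_nonneg hc0, zero_sub, abs_neg, abs_of_nonneg hc0]
      linarith
  have hsum := Finset.sum_le_sum fun x (_ : x ∈ univ) => hpt x
  rw [Finset.sum_add_distrib, Finset.sum_sub_distrib, Finset.sum_sub_distrib,
    Finset.sum_sub_distrib, hu1, hc1, hq1] at hsum
  have htri : ∑ x, |q x - unifOn G x| ≤ ∑ x, |q x - c| + ∑ x, |c - unifOn G x| := by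
    rw [← Finset.sum_add_distrib]
    exact Finset.sum_le_sum fun x _ => abs_sub_le _ _ _
  unfold tvDist
  linarith

theorem num_bound (p r h b N k T3 : ℕ) (hp : 3 ≤ p) (hr : 2 ≤ r)
    (hbr : b ≤ r) (c : ℕ) (hbc : b = h + 1 + c) (hc : 5 * Real.log r ≤ c)
    (hN : N = r / b) (hk : 2 * (h * Real.log p + 5 * Real.log r) ≤ k)
    (hT3 : 24 * (1 + 128 * (p:ℝ)) * b * r * Real.log r ≤ T3)
    (hrp : 256 * Real.log p ≤ r) :
    4*(Real.exp (-((N/(1+128*(p:ℝ)))/(4*r*((r:ℝ)-1))*T3)) * (r*((h + 1) * Real.log p))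
      + (h + 1) * Real.log p * (r*(N*((p:ℝ)^h * (2*((p:ℝ)⁻¹)^(b-1) + (1/2)^k))))) ≤ 1 / 16 := by
  have hp0 : (3:ℝ) ≤ p := by exact_mod_cast hp
  have hr0 : (2:ℝ) ≤ r := by exact_mod_cast hr
  have hl : 0 ≤ Real.log p := Real.log_nonneg (by linarith)
  have hLr : 0 ≤ Real.log r := Real.log_nonneg (by linarith)
  have hrpos : (0:ℝ) < r := by linarith
  have hexpr : ∀ n : ℕ, Real.exp (-(n * Real.log r)) = ((r:ℝ)^n)⁻¹ := by
    intro n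
    rw [Real.exp_neg, Real.exp_nat_mul, Real.exp_log hrpos]
  have hb0 : 0 < b := by omega
  have hb0' : (0:ℝ) < b := by exact_mod_cast hb0
  have hh : (h:ℝ) + 1 ≤ r := by exact_mod_cast (by omega : h + 1 ≤ r)
  have hNr : (N:ℝ) ≤ r := by
    exact_mod_cast (by rw [hN]; exact Nat.div_le_self _ _ : N ≤ r)
  have hN2 : (r:ℝ) ≤ 2 * b * N := by
    have h1 : 1 ≤ N := by rw [hN]; exact (Nat.one_le_div_iff hb0).2 hbr
    have h2 : r < b * (N + 1) := by rw [hN]; exact Nat.lt_mul_div_succ r hb0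
    have h3 : r ≤ 2 * b * N := by nlinarith
    exact_mod_cast h3
  -- first exponential
  have hθ : 3 * Real.log r ≤ (N/(1+128*(p:ℝ)))/(4*r*((r:ℝ)-1))*T3 := by
    have hD : (0:ℝ) < 1 + 128 * p := by positivity
    have h1 : 0 < 4 * r * ((r:ℝ) - 1) := by
      apply mul_pos <;> linarith
    rw [div_div, div_mul_eq_mul_div, le_div_iff₀ (mul_pos hD h1)]
    have h2 : (N:ℝ) * (24 * (1 + 128 * (p:ℝ)) * b * r * Real.log r) ≤ N * T3 :=
      mul_le_mul_of_nonneg_left hT3 (by positivity)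
    refine le_trans ?_ h2
    have h3 : (N:ℝ) * (24 * (1 + 128 * (p:ℝ)) * b * r * Real.log r) =
      12 * (1 + 128 * (p:ℝ)) * r * Real.log r * (2 * b * N) := by ring
    rw [h3]
    have h4 : 3 * Real.log r * ((1 + 128 * (p:ℝ)) * (4 * r * ((r:ℝ) - 1))) =
      12 * (1 + 128 * (p:ℝ)) * r * Real.log r * (r - 1) := by ring
    rw [h4]
    apply mul_le_mul_of_nonneg_left (by linarith) (by positivity)
  have hE1 : Real.exp (-((N/(1+128*(p:ℝ)))/(4*r*((r:ℝ)-1))*T3)) ≤ ((r:ℝ)^3)⁻¹ := by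
    rw [← hexpr 3]
    apply Real.exp_le_exp.2
    push_cast
    linarith
  -- second
  have hpc : (p:ℝ)^h * ((p:ℝ)⁻¹)^(b-1) ≤ ((r:ℝ)^5)⁻¹ := by
    have : b - 1 = h + c := by omega
    rw [this, pow_add, ← mul_assoc, ← mul_pow, mul_inv_cancel₀ (by linarith), one_pow, one_mul,
      ← hexpr 5]
    have h1 : (p:ℝ)⁻¹ ≤ Real.exp (-1) := by
      rw [Real.exp_neg]
      apply inv_anti₀ (Real.exp_pos _)
      have := Real.exp_one_lt_d9
      linarith
    calc ((p:ℝ)⁻¹)^c ≤ (Real.exp (-1))^c := pow_le_pow_left₀ (by positivity) h1 c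
      _ = Real.exp (c * (-1)) := (Real.exp_nat_mul _ _).symm
      _ ≤ _ := by
        apply Real.exp_le_exp.2
        push_cast
        linarith
  have hkc : (p:ℝ)^h * (1/2)^k ≤ ((r:ℝ)^5)⁻¹ := by
    rw [← hexpr 5]
    have h1 : (1/2:ℝ) ≤ Real.exp (-(1/2)) := by
      have := Real.add_one_le_exp (-(1/2):ℝ)
      linarith
    have h2 : (p:ℝ)^h = Real.exp (h * Real.log p) := by
      rw [Real.exp_nat_mul, Real.exp_log (by linarith)]
    calc (p:ℝ)^h * (1/2)^k ≤ (p:ℝ)^h * (Real.exp (-(1/2)))^k := by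
          apply mul_le_mul_of_nonneg_left (pow_le_pow_left₀ (by norm_num) h1 k) (by positivity)
      _ = Real.exp (h * Real.log p + k * (-(1/2))) := by
          rw [h2, Real.exp_add, ← Real.exp_nat_mul]
      _ ≤ _ := by
        apply Real.exp_le_exp.2
        push_cast
        linarith
  have hA : Real.exp (-((N/(1+128*(p:ℝ)))/(4*r*((r:ℝ)-1))*T3)) * (r*((h + 1) * Real.log p))
      ≤ Real.log p / r := by
    calc _ ≤ ((r:ℝ)^3)⁻¹ * (r*(r * Real.log p)) := by gcongr
      _ = _ := by field_simp
  have hB : (h + 1) * Real.log p * (r*(N*((p:ℝ)^h * (2*((p:ℝ)⁻¹)^(b-1) + (1/2)^k))))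
      ≤ 3 * Real.log p / r := by
    have h1 : (p:ℝ)^h * (2*((p:ℝ)⁻¹)^(b-1) + (1/2)^k) ≤ 3 * ((r:ℝ)^5)⁻¹ := by
      rw [mul_add]; linarith
    calc _ ≤ r * Real.log p * (r * (r * (3 * ((r:ℝ)^5)⁻¹))) := by gcongr
      _ = 3 * Real.log p / r * (1 / r) := by field_simp
      _ ≤ 3 * Real.log p / r * 1 := by
        apply mul_le_mul_of_nonneg_left _ (by positivity)
        rw [div_le_one hrpos]; linarith
      _ = _ := mul_one _
  have hC : Real.log p / r ≤ 1 / 256 := by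
    rw [div_le_div_iff₀ hrpos (by norm_num)]
    linarith
  have : 3 * Real.log p / r = 3 * (Real.log p / r) := by ring
  linarith

theorem time_bound (p r h b k T T3 : ℕ) (hp : 3 ≤ p) (hr : 3 ≤ r) (c : ℕ)
    (hbc : b = h + 1 + c) (hc : (c:ℝ) ≤ 5 * Real.log r + 1)
    (hk : (k:ℝ) ≤ 2 * (h * Real.log p + 5 * Real.log r) + 1)
    (hT : (T:ℝ) ≤ 5000 * r * Real.log r)
    (hT3 : (T3:ℝ) ≤ 24 * (1 + 128 * (p:ℝ)) * b * r * Real.log r + 1) :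
    ((k * T + T3 : ℕ) : ℝ) ≤ (5000 * (2 * Real.log p + 11) + 168 * (1 + 128 * (p:ℝ)) + 1) * r *
      (h + Real.log r) * Real.log r := by
  have hp0 : (3:ℝ) ≤ p := by exact_mod_cast hp
  have hr0 : (3:ℝ) ≤ r := by exact_mod_cast hr
  have hl : 0 ≤ Real.log p := Real.log_nonneg (by linarith)
  have hL : 1 ≤ Real.log r := by
    rw [Real.le_log_iff_exp_le (by linarith)]
    have := Real.exp_one_lt_d9
    linarith
  have hh : (0:ℝ) ≤ h := by positivity
  set L := Real.log r
  set l := Real.log p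
  have hk' : (k:ℝ) ≤ (2 * l + 11) * (h + L) := by nlinarith
  have hb' : (b:ℝ) ≤ 7 * (h + L) := by
    rw [hbc]; push_cast; linarith
  have h1 : (k:ℝ) * T ≤ (2 * l + 11) * (h + L) * (5000 * r * L) := by gcongr
  have h2 : 24 * (1 + 128 * (p:ℝ)) * b * r * L ≤ 24 * (1 + 128 * (p:ℝ)) * (7 * (h + L)) * r * L := by
    gcongr
  have h3 : 1 ≤ r * (h + L) * L := by
    have ha : 1 ≤ (h:ℝ) + L := by linarith
    have hb : 1 ≤ r * (h + L) := by nlinarith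
    nlinarith
  push_cast
  nlinarith
end Supp
theorem ev_large (p : ℕ) (ε : ℝ) (hε : ε < 1) : ∃ r₂ : ℕ, ∀ r : ℕ, r₂ ≤ r →
    256 * Real.log p ≤ r ∧ ε * r + 5 * Real.log r + 2 ≤ r := by
  have h1 := (Real.isLittleO_log_id_atTop.comp_tendsto tendsto_natCast_atTop_atTop).def
    (show (0:ℝ) < (1 - ε) / 10 by linarith)
  have h2 : ∀ᶠ r : ℕ in Filter.atTop, 256 * Real.log p ≤ r :=
    tendsto_natCast_atTop_atTop.eventually_ge_atTop _
  have h3 : ∀ᶠ r : ℕ in Filter.atTop, 4 / (1 - ε) ≤ r :=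
    tendsto_natCast_atTop_atTop.eventually_ge_atTop _
  obtain ⟨r₂, h⟩ := Filter.eventually_atTop.1 (h1.and (h2.and h3))
  refine ⟨r₂, fun r hr => ⟨(h r hr).2.1, ?_⟩⟩
  obtain ⟨ha, -, hb⟩ := h r hr
  rw [div_le_iff₀ (by linarith)] at hb
  simp only [Function.comp, id, Real.norm_eq_abs, Nat.abs_cast] at ha
  have := le_abs_self (Real.log r)
  nlinarith

theorem stmt18 :
    ∀ (p : ℕ) [Fact (Nat.Prime p)], p ≠ 2 →
    ∀ ε : ℝ, 0 < ε → ε < 1 →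
      ∃ C : ℝ, 0 < C ∧ ∃ r₀ : ℕ, ∀ r : ℕ, r₀ ≤ r →
        ∀ (m : ℕ) (W : Type) [AddCommGroup W] [Module (ZMod p) W] [Fintype W]
          [DecidableEq W] [HeisData p W],
          1 ≤ m → Module.finrank (ZMod p) W = 2 * m →
          (∀ v : W, HeisData.ω (p := p) v v = 0) →
          (∀ v : W, (∀ w : W, HeisData.ω (p := p) v w = 0) → v = 0) →
          (2 * m : ℝ) ≤ ε * r →
          (mixTime (paQ p r (W × ZMod p)) (unifOn (genSet r (W × ZMod p)))
              (genSet r (W × ZMod p)) : ℝ) ≤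
            C * r * ((2 * m : ℝ) + Real.log r) * Real.log r ∧
          (Real.log r ≤ (2 * m : ℝ) →
            (mixTime (paQ p r (W × ZMod p)) (unifOn (genSet r (W × ZMod p)))
                (genSet r (W × ZMod p)) : ℝ) ≤
              C * r * (2 * m : ℝ) * Real.log r) := by
  intro p _ hp2 ε hε0 hε1
  have hp3 : 3 ≤ p := by
    have := (Fact.out : Nat.Prime p).two_le
    omega
  obtain ⟨r1, hr1, hcyc⟩ := cyc_mix p hp3
  obtain ⟨r2, hr2⟩ := ev_large p ε hε1
  set K : ℝ := 5000 * (2 * Real.log p + 11) + 168 * (1 + 128 * (p:ℝ)) + 1 with hK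
  have hK0 : 0 < K := by
    have : 0 ≤ Real.log p := Real.log_natCast_nonneg p
    positivity
  refine ⟨2 * K, by linarith, max r1 r2, ?_⟩
  intro r hr m W _ _ _ _ _ hm hfr hω hnd hmr
  have hrr1 : r1 ≤ r := le_trans (le_max_left _ _) hr
  obtain ⟨hlp, hlarge⟩ := hr2 r (le_trans (le_max_right _ _) hr)
  obtain ⟨T, hTle, hTmix⟩ := hcyc r hrr1
  have hr512 : 512 ≤ r := hr1.trans hrr1
  have hne : ∃ v w : W, HeisData.ω (p := p) v w ≠ 0 := by
    have : Nontrivial W := Module.nontrivial_of_finrank_pos (R := ZMod p) (by omega)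
    obtain ⟨v, hv⟩ := exists_ne (0 : W)
    by_contra hcon
    push Not at hcon
    exact hv (hnd v (hcon v))
  have hL0 : 0 ≤ Real.log r := Real.log_natCast_nonneg r
  have hl0 : 0 ≤ Real.log p := Real.log_natCast_nonneg p
  have hr0 : (0:ℝ) ≤ r := by positivity
  set h : ℕ := 2 * m with hh
  have hhc : (h : ℝ) = 2 * m := by rw [hh]; push_cast; ring
  set c : ℕ := ⌈5 * Real.log r⌉₊ with hcdef
  have hc1 : 5 * Real.log r ≤ c := Nat.le_ceil _
  have hc2 : (c:ℝ) ≤ 5 * Real.log r + 1 := (Nat.ceil_lt_add_one (by positivity)).le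
  set b : ℕ := h + 1 + c with hb
  have hbr : b ≤ r := by
    have : (b:ℝ) ≤ r := by
      rw [hb]; push_cast; linarith
    exact_mod_cast this
  set k : ℕ := ⌈2 * (h * Real.log p + 5 * Real.log r)⌉₊ with hkdef
  have hk1 : 2 * (h * Real.log p + 5 * Real.log r) ≤ k := Nat.le_ceil _
  have hk2 : (k:ℝ) ≤ 2 * (h * Real.log p + 5 * Real.log r) + 1 :=
    (Nat.ceil_lt_add_one (by positivity)).le
  set T3 : ℕ := ⌈24 * (1 + 128 * (p:ℝ)) * b * r * Real.log r⌉₊ with hT3def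
  have hT31 : 24 * (1 + 128 * (p:ℝ)) * b * r * Real.log r ≤ T3 := Nat.le_ceil _
  have hT32 : (T3:ℝ) ≤ 24 * (1 + 128 * (p:ℝ)) * b * r * Real.log r + 1 :=
    (Nat.ceil_lt_add_one (by positivity)).le
  have hnum := num_bound p r h b (r / b) k T3 hp3 (by omega) hbr c hb hc1 rfl hk1 hT31 hlp
  have htime := time_bound p r h b k T T3 hp3 (by omega) c hb hc2 hk2 hTle hT32
  rw [← hK, hhc] at htime
  have hcard : Real.log (Fintype.card (W × ZMod p)) = (h + 1) * Real.log p := by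
    rw [Fintype.card_prod, ZMod.card, ← Nat.card_eq_fintype_card (α := W),
      Module.natCard_eq_pow_finrank (K := ZMod p), hfr, Nat.card_zmod, ← pow_succ]
    push_cast
    rw [Real.log_pow]
    push_cast
    ring
  have hmixt : (mixTime (paQ p r (W × ZMod p)) (unifOn (genSet r (W × ZMod p)))
      (genSet r (W × ZMod p))) ≤ k * T + T3 := by
    unfold mixTime
    apply Nat.sInf_le
    intro x hx
    have hmain := heis_mix hp2 hω hne (by omega : 2 ≤ r) T
      (fun u hu => hTmix (Multiplicative (ZMod p)) (by simp [ZMod.card]) u hu) hx b (r / b) k T3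
      (by omega) (Nat.div_mul_le_self r b)
    rw [hcard, hfr] at hmain
    have hS := hmain.trans hnum
    refine tv_of_unif _ _ ⟨x, hx⟩ (pow_row_sum (by omega) _ x) (pow_supp (hexp hω) hx _) ?_
    have : (1/16:ℝ) = (1/4)^2 := by norm_num
    rw [this] at hS
    exact (pow_le_pow_iff_left₀ (Finset.sum_nonneg fun _ _ => abs_nonneg _) (by norm_num) two_ne_zero).1 hS
  have hmixR : (mixTime (paQ p r (W × ZMod p)) (unifOn (genSet r (W × ZMod p)))
      (genSet r (W × ZMod p)) : ℝ) ≤ K * r * ((2 * m : ℝ) + Real.log r) * Real.log r :=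
    le_trans (by exact_mod_cast hmixt) htime
  constructor
  · refine hmixR.trans ?_
    gcongr
    linarith
  · intro hlog
    refine hmixR.trans ?_
    calc K * r * ((2 * m : ℝ) + Real.log r) * Real.log r
        ≤ K * r * ((2 * m : ℝ) + 2 * m) * Real.log r := by gcongr
      _ = _ := by ring
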